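/- Suppose 0 < r < p < ∞. There is a constant c = c(r, p) such that whenever ‖·‖_X is an admissible extended-value quasinorm on the Borel functions of a compact Hausdorff space satisfying an upper p-estimate (constant 1) and a lower q-estimate (constant 1), where q/p = 1 + θ with 0 < θ < 1, the r-convexity constant satisfies log M^{(r)}(X) ≤ θ (c + (1/p)|log θ|). -/

import Mathlib

open Set Filter Topology MeasureTheory ENNReal

/-- An admissible extended-value quasinorm on the Borel functions of `Ω`. -/
structure AdmissibleQuasinorm (Ω : Type*) [TopologicalSpace Ω] [MeasurableSpace Ω] where
  N : (Ω → ℝ) → ℝ≥0∞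
  mono : ∀ f g : Ω → ℝ, Measurable f → Measurable g →
    (∀ x, |f x| ≤ |g x|) → N f ≤ N g
  smul : ∀ (α : ℝ) (f : Ω → ℝ), Measurable f →
    N (fun x => α * f x) = ENNReal.ofReal |α| * N f
  quasi : ∃ C : ℝ≥0∞, ∀ f g : Ω → ℝ, Measurable f → Measurable g →
    (∀ x, 0 ≤ f x) → (∀ x, 0 ≤ g x) → (∀ x, f x = 0 ∨ g x = 0) →
    N (fun x => f x + g x) ≤ C * (N f + N g)
  exists_pos : ∃ u : Ω → ℝ, Measurable u ∧ (∀ x, 0 < u x) ∧ 0 < N u ∧ N u < ⊤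
  (cont : ∀ (f : ℕ → Ω → ℝ) (g : Ω → ℝ), (∀ n, Measurable (f n)) → Measurable g →
    (∀ n x, 0 ≤ f n x) → (∀ n x, f n x ≤ f (n + 1) x) →
    (∀ x, Tendsto (fun n => f n x) atTop (𝓝 (g x))) →
    Tendsto (fun n => N (f n)) atTop (𝓝 (N g)))

/-- `f₁, …, fₙ` are disjointly supported. -/
def DisjSupp {Ω : Type*} {n : ℕ} (f : Fin n → Ω → ℝ) : Prop :=
  ∀ i j, i ≠ j → ∀ x, f i x = 0 ∨ f j x = 0

/-- A crude upper `p`-estimate with constant `a`. -/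
def CrudeUpper {Ω : Type*} [TopologicalSpace Ω] [MeasurableSpace Ω]
    (X : AdmissibleQuasinorm Ω) (p a : ℝ) : Prop :=
  ∀ (n : ℕ) (f : Fin n → Ω → ℝ), (∀ i, Measurable (f i)) → DisjSupp f →
    X.N (fun x => ∑ i, f i x) ≤ ENNReal.ofReal a * (∑ i, X.N (f i) ^ p) ^ (1 / p)

/-- A crude lower `q`-estimate with constant `b`. -/
def CrudeLower {Ω : Type*} [TopologicalSpace Ω] [MeasurableSpace Ω]
    (X : AdmissibleQuasinorm Ω) (q b : ℝ) : Prop :=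
  ∀ (n : ℕ) (f : Fin n → Ω → ℝ), (∀ i, Measurable (f i)) → DisjSupp f →
    (∑ i, X.N (f i) ^ q) ^ (1 / q) ≤ ENNReal.ofReal b * X.N (fun x => ∑ i, f i x)

/-!
Write `q = p (1 + θ)`. For a function `F` of finite quasinorm and a finite Borel partition, the set
function `φ A = ‖A.indicator F‖ ^ p` is a submeasure whose power `φ ^ (1 + θ)` is superadditive.
Minimax duality yields a measure `μ ≤ φ` together with a fractional cover by sets on which `μ = φ`,
and superadditivity transfers the bound `φ ≤ (1 + θ) ^ 2 μ` from these sets to the whole space.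

Apply this with `F = (∑ lᵢ |gᵢ| ^ r) ^ (1 / r)`, where `‖gᵢ‖ ≤ 1` and `∑ lᵢ = 1`, to a partition on
which each ratio `(|gᵢ| / F) ^ p` stays within one step of a geometric scale of ratio `exp θ`. The
`lᵢ`-average of the `r / p`-th powers of these ratios is `1`, so linear bounds for `x ↦ x ^ (r / p)`
with slopes `wₖ` adapted to the scale dominate the total mass of `μ`, up to a factor `exp θ`, by an
average over `i` of sums `∑ₖ wₖ vₖ`, where `vₖ` is the `p`-th power of the quasinorm of `gᵢ` on its
`k`-th level set. The lower estimate says `∑ vₖ ^ (1 + θ) ≤ 1`, and Hölder's inequality gives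
`∑ wₖ vₖ ≤ (∑ wₖ ^ ((1 + θ) / θ)) ^ (θ / (1 + θ))`. Only about `1 / θ` of the weights are
significant, and `(C / θ) ^ θ` is the source of the term `θ |log θ|`.
-/

/-! ### Optimal strategies in matrix games -/

section MatrixGame

open scoped Matrix

variable {ι κ : Type*} [Fintype ι] [Fintype κ]

/-- An optimal pair of mixed strategies, with value `v`, for the matrix game with payoff `a`, in
which the minimizing player may only use the rows in `E`. The last two fields are complementary
slackness. -/
structure IsGameSolution (a : Matrix ι κ ℝ) (E : Set ι) (μ : ι → ℝ) (l : κ → ℝ) (v : ℝ) :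
    Prop where
  row_mem : μ ∈ stdSimplex ℝ ι
  row_eq_zero : ∀ i ∉ E, μ i = 0
  col_mem : l ∈ stdSimplex ℝ κ
  vecMul_le : ∀ k, (μ ᵥ* a) k ≤ v
  le_mulVec : ∀ i ∈ E, v ≤ (a *ᵥ l) i
  vecMul_eq : ∀ k, l k ≠ 0 → (μ ᵥ* a) k = v
  mulVec_eq : ∀ i, μ i ≠ 0 → (a *ᵥ l) i = v

theorem exists_isSaddlePointOn_dotProduct_mulVec [Nonempty κ] (a : Matrix ι κ ℝ) {E : Set ι}
    (hE : E.Nonempty) :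
    ∃ μ ∈ stdSimplex ℝ ι ∩ Eᶜ.pi fun _ => {0}, ∃ l ∈ stdSimplex ℝ κ,
      IsSaddlePointOn (stdSimplex ℝ ι ∩ Eᶜ.pi fun _ => {0}) (stdSimplex ℝ κ)
        (fun μ l => μ ⬝ᵥ a *ᵥ l) μ l := by
  classical
  obtain ⟨i, hi⟩ := hE
  obtain ⟨k⟩ := ‹Nonempty κ›
  have hconvex : Convex ℝ (stdSimplex ℝ ι ∩ Eᶜ.pi fun _ => {0}) :=
    (convex_stdSimplex ℝ ι).inter (convex_pi fun _ _ => convex_singleton 0)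
  refine Sion.exists_isSaddlePointOn
    ⟨Pi.single i 1, single_mem_stdSimplex ℝ i, fun j hj => ?_⟩ hconvex
    ((isCompact_stdSimplex ℝ ι).inter_right (isClosed_set_pi fun _ _ => isClosed_singleton))
    (fun l _ => (Continuous.continuousOn (by fun_prop)).lowerSemicontinuousOn)
    (fun l _ => ConvexOn.quasiconvexOn ⟨hconvex, fun μ _ ν _ s t _ _ _ => ?_⟩)
    (convex_stdSimplex ℝ κ) ⟨Pi.single k 1, single_mem_stdSimplex ℝ k⟩
    (isCompact_stdSimplex ℝ κ)
    (fun μ _ => (Continuous.continuousOn (by fun_prop)).upperSemicontinuousOn)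
    (fun μ _ => ConcaveOn.quasiconcaveOn
      ⟨convex_stdSimplex ℝ κ, fun l _ l' _ s t _ _ _ => ?_⟩)
  · exact Pi.single_eq_of_ne (ne_of_mem_of_not_mem hi hj).symm 1
  · simp only [add_dotProduct, smul_dotProduct, le_refl]
  · simp only [Matrix.mulVec_add, Matrix.mulVec_smul, dotProduct_add, dotProduct_smul, le_refl]

theorem eq_of_dotProduct_eq_of_mem_stdSimplex {μ b : ι → ℝ} {v : ℝ} (hμ : μ ∈ stdSimplex ℝ ι)
    (hb : ∀ i, μ i ≠ 0 → v ≤ b i) (h : μ ⬝ᵥ b = v) {i : ι} (hi : μ i ≠ 0) : b i = v := by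
  have hsum : ∑ j, μ j * (b j - v) = 0 := by
    simp only [mul_sub, Finset.sum_sub_distrib, ← Finset.sum_mul, hμ.2, one_mul]
    exact sub_eq_zero.mpr h
  have hterm : ∀ j ∈ Finset.univ, 0 ≤ μ j * (b j - v) := fun j _ => by
    by_cases hj : μ j = 0
    · simp [hj]
    · exact mul_nonneg (hμ.1 j) (sub_nonneg.mpr (hb j hj))
  have := (Finset.sum_eq_zero_iff_of_nonneg hterm).mp hsum i (Finset.mem_univ i)
  exact sub_eq_zero.mp ((mul_eq_zero.mp this).resolve_left hi)

theorem exists_isGameSolution [Nonempty κ] (a : Matrix ι κ ℝ) {E : Set ι} (hE : E.Nonempty) :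
    ∃ μ l v, IsGameSolution a E μ l v := by
  classical
  obtain ⟨μ, ⟨hμ, hμE⟩, l, hl, hsaddle⟩ := exists_isSaddlePointOn_dotProduct_mulVec a hE
  have hcol : ∀ k, (μ ᵥ* a) k ≤ μ ⬝ᵥ a *ᵥ l := fun k => by
    simpa only [Matrix.dotProduct_mulVec, dotProduct_single_one] using
      hsaddle μ ⟨hμ, hμE⟩ (Pi.single k 1) (single_mem_stdSimplex ℝ k)
  have hrow : ∀ i ∈ E, μ ⬝ᵥ a *ᵥ l ≤ (a *ᵥ l) i := fun i hi => by
    simpa using hsaddle (Pi.single i 1) ⟨single_mem_stdSimplex ℝ i, fun j hj =>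
      Pi.single_eq_of_ne (ne_of_mem_of_not_mem hi hj).symm 1⟩ l hl
  have hsupp : ∀ i, μ i ≠ 0 → i ∈ E := fun i hi => by_contra fun h => hi (hμE i h)
  refine ⟨μ, l, μ ⬝ᵥ a *ᵥ l, hμ, hμE, hl, hcol, hrow, fun k hk => neg_injective ?_, fun i hi =>
    eq_of_dotProduct_eq_of_mem_stdSimplex hμ (fun j hj => hrow j (hsupp j hj)) rfl hi⟩
  exact eq_of_dotProduct_eq_of_mem_stdSimplex (b := -(μ ᵥ* a)) hl
    (fun j _ => neg_le_neg (hcol j))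
    (by rw [dotProduct_neg, Matrix.dotProduct_mulVec, dotProduct_comm]) hk

end MatrixGame

/-! ### Submeasures with a lower estimate -/

section Holder

variable {ι : Type*} (s : Finset ι) {l a b : ι → ℝ} {t : ℝ}

theorem sum_mul_rpow_mul_rpow_le (hl : ∀ i ∈ s, 0 ≤ l i) (ha : ∀ i ∈ s, 0 ≤ a i)
    (hb : ∀ i ∈ s, 0 ≤ b i) (ht0 : 0 < t) (ht1 : t < 1) :
    ∑ i ∈ s, l i * (a i ^ (1 - t) * b i ^ t) ≤
      (∑ i ∈ s, l i * a i) ^ (1 - t) * (∑ i ∈ s, l i * b i) ^ t := by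
  have hconj : Real.HolderConjugate (1 - t)⁻¹ t⁻¹ :=
    Real.HolderConjugate.one_sub_inv_inv ht0 ht1
  have hsplit : ∀ i ∈ s, l i * (a i ^ (1 - t) * b i ^ t) =
      (l i * a i) ^ (1 - t) * (l i * b i) ^ t := fun i hi => by
    rw [Real.mul_rpow (hl i hi) (ha i hi), Real.mul_rpow (hl i hi) (hb i hi), mul_mul_mul_comm,
      ← Real.rpow_add_of_nonneg (hl i hi) (sub_nonneg.mpr ht1.le) ht0.le, sub_add_cancel,
      Real.rpow_one]
  have hinv : ∀ {c : ι → ℝ} {u : ℝ}, (∀ i ∈ s, 0 ≤ c i) → u ≠ 0 →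
      ∑ i ∈ s, ((l i * c i) ^ u) ^ u⁻¹ = ∑ i ∈ s, l i * c i := fun hc hu =>
    Finset.sum_congr rfl fun i hi => Real.rpow_rpow_inv (mul_nonneg (hl i hi) (hc i hi)) hu
  have := Real.inner_le_Lp_mul_Lq_of_nonneg s hconj
    (fun i hi => Real.rpow_nonneg (mul_nonneg (hl i hi) (ha i hi)) (1 - t))
    (fun i hi => Real.rpow_nonneg (mul_nonneg (hl i hi) (hb i hi)) t)
  rwa [← Finset.sum_congr rfl hsplit, hinv ha (sub_pos.mpr ht1).ne', hinv hb ht0.ne', one_div,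
    one_div, inv_inv, inv_inv] at this

end Holder

section Submeasure

open scoped Matrix

variable {S : Type*} [DecidableEq S]

/-- A submeasure on the finite subsets of `S`: zero at `∅`, monotone and subadditive over
disjoint unions. -/
structure IsSubmeasure (φ : Finset S → ℝ) : Prop where
  empty : φ ∅ = 0
  mono : Monotone φ
  union_le : ∀ A B, Disjoint A B → φ (A ∪ B) ≤ φ A + φ B

/-- The lower `Q`-estimate for a set function: `φ ^ Q` is superadditive. -/
def HasLowerEstimate (φ : Finset S → ℝ) (Q : ℝ) : Prop :=
  ∀ A B, Disjoint A B → φ A ^ Q + φ B ^ Q ≤ φ (A ∪ B) ^ Q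

/-- An optimal pair for the linear program of maximizing `∑ x, μ x` subject to `μ ≤ φ`: a measure
`μ` dominated by `φ` and a fractional cover `l` of the points that `φ` charges, related by
complementary slackness. -/
structure IsOptimalPair [Fintype S] (φ : Finset S → ℝ) (μ : S → ℝ) (l : Finset S → ℝ) :
    Prop where
  measure_nonneg : ∀ x, 0 ≤ μ x
  cover_nonneg : ∀ A, 0 ≤ l A
  sum_le : ∀ A, ∑ x ∈ A, μ x ≤ φ A
  one_le_cover : ∀ x, 0 < φ {x} → 1 ≤ ∑ A with x ∈ A, l A
  sum_eq : ∀ A, l A ≠ 0 → ∑ x ∈ A, μ x = φ A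
  cover_eq_one : ∀ x, μ x ≠ 0 → ∑ A with x ∈ A, l A = 1

variable {φ : Finset S → ℝ}

/-- The payoff matrix of the game in which a point `x` is played against a set `A`, which wins
`1 / φ A` when it contains `x`. -/
noncomputable def densityMatrix (φ : Finset S → ℝ) : Matrix S (Finset S) ℝ :=
  Matrix.of fun x A => if x ∈ A then (φ A)⁻¹ else 0

theorem vecMul_densityMatrix [Fintype S] (μ : S → ℝ) (A : Finset S) :
    (μ ᵥ* densityMatrix φ) A = (∑ x ∈ A, μ x) / φ A := by
  simp [densityMatrix, Matrix.vecMul, dotProduct, Finset.sum_ite_mem, div_eq_mul_inv,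
    Finset.sum_mul]

theorem densityMatrix_mulVec [Fintype S] (l : Finset S → ℝ) (x : S) :
    (densityMatrix φ *ᵥ l) x = ∑ A with x ∈ A, l A / φ A := by
  simp [densityMatrix, Matrix.mulVec, dotProduct, Finset.sum_filter, div_eq_inv_mul]

namespace IsSubmeasure

theorem nonneg (hφ : IsSubmeasure φ) (A : Finset S) : 0 ≤ φ A :=
  hφ.empty.symm.trans_le (hφ.mono A.empty_subset)

theorem le_inter_add_sdiff (hφ : IsSubmeasure φ) (U A : Finset S) :
    φ U ≤ φ (A ∩ U) + φ (U \ A) := by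
  have := hφ.union_le (U \ A) (U ∩ A) (Finset.disjoint_sdiff_inter U A)
  rwa [Finset.sdiff_union_inter, add_comm, Finset.inter_comm] at this

theorem eq_zero_of_forall_singleton (hφ : IsSubmeasure φ) {U : Finset S}
    (hU : ∀ x ∈ U, φ {x} = 0) : φ U = 0 := by
  induction U using Finset.induction_on with
  | empty => exact hφ.empty
  | insert x U hx ih =>
    refine (hφ.nonneg _).antisymm' ?_
    calc φ (insert x U) ≤ φ {x} + φ U :=
          Finset.insert_eq x U ▸ hφ.union_le _ _ (Finset.disjoint_singleton_left.mpr hx)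
      _ = 0 := by
        rw [hU x (Finset.mem_insert_self x U), ih fun y hy => hU y (Finset.mem_insert_of_mem hy),
          add_zero]

variable [Fintype S]

theorem exists_isOptimalPair (hφ : IsSubmeasure φ) : ∃ μ l, IsOptimalPair φ μ l := by
  rcases {x | 0 < φ {x}}.eq_empty_or_nonempty with hE | hE
  · exact ⟨0, 0, by simp, by simp, by simpa using hφ.nonneg,
      fun x hx => absurd hx (eq_empty_iff_forall_notMem.mp hE x), by simp, by simp⟩
  obtain ⟨μ, l, v, h⟩ := exists_isGameSolution (densityMatrix φ) hE
  have hφ0 : ∀ {A : Finset S} {x}, x ∈ A → μ x ≠ 0 → 0 < φ A := fun hxA hx =>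
    (not_imp_comm.mp (h.row_eq_zero _) hx : 0 < φ {_}).trans_le
      (hφ.mono (Finset.singleton_subset_iff.mpr hxA))
  have hv : 0 < v := by
    obtain ⟨x, hx⟩ := hE
    have := h.vecMul_le Finset.univ
    rw [vecMul_densityMatrix, h.row_mem.2, one_div] at this
    exact (inv_pos.mpr (lt_of_lt_of_le hx (hφ.mono (Finset.subset_univ _)))).trans_le this
  refine ⟨fun x => μ x / v, fun A => l A / φ A / v, fun x => div_nonneg (h.row_mem.1 x) hv.le,
    fun A => div_nonneg (div_nonneg (h.col_mem.1 A) (hφ.nonneg A)) hv.le, fun A => ?_,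
    fun x hx => ?_, fun A hA => ?_, fun x hx => ?_⟩
  · rw [← Finset.sum_div]
    by_cases hA : ∀ x ∈ A, μ x = 0
    · rw [Finset.sum_eq_zero hA, zero_div]
      exact hφ.nonneg A
    · push Not at hA
      obtain ⟨x, hxA, hx⟩ := hA
      have := h.vecMul_le A
      rw [vecMul_densityMatrix, div_le_iff₀ (hφ0 hxA hx)] at this
      rwa [div_le_iff₀' hv]
  · rw [← Finset.sum_div, one_le_div hv, ← densityMatrix_mulVec]
    exact h.le_mulVec x hx
  · obtain ⟨hl, hφA⟩ := div_ne_zero_iff.mp (div_ne_zero_iff.mp hA).1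
    have := h.vecMul_eq A hl
    rw [vecMul_densityMatrix, div_eq_iff hφA] at this
    rw [← Finset.sum_div, this, mul_div_cancel_left₀ _ hv.ne']
  · rw [← Finset.sum_div, ← densityMatrix_mulVec, h.mulVec_eq x (div_ne_zero_iff.mp hx).1,
      div_self hv.ne']

theorem le_of_fractionalCover (hφ : IsSubmeasure φ) {H : Finset S → ℝ} {l : Finset S → ℝ}
    (hH : ∀ U, 0 ≤ H U) (hl : ∀ A, 0 ≤ l A)
    (hcover : ∀ x, 0 < φ {x} → 1 ≤ ∑ A with x ∈ A, l A)
    (h : ∀ U, ∑ A, l A * φ (A ∩ U) + ∑ A, l A * H (U \ A) ≤ (∑ A, l A) * H U)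
    (U : Finset S) : φ U ≤ H U := by
  -- In a minimal counterexample `U`, every `U \ A` with `A` meeting `U` satisfies the bound;
  -- averaging `φ U ≤ φ (A ∩ U) + φ (U \ A)` over the cover then contradicts `h`.
  induction U using Finset.strongInduction with
  | H U ih =>
    by_cases hnull : ∀ x ∈ U, φ {x} = 0
    · exact (hφ.eq_zero_of_forall_singleton hnull).trans_le (hH U)
    push Not at hnull
    obtain ⟨x, hxU, hx⟩ := hnull
    by_contra! hlt
    have hsdiff : ∀ A, φ (U \ A) ≤ H (U \ A) + if x ∈ A then 0 else φ U - H U := fun A => by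
      by_cases hUA : U \ A = U
      · have : x ∉ A := (Finset.mem_sdiff.mp (hUA.symm ▸ hxU)).2
        simp [hUA, this]
      · have := ih (U \ A) (Finset.ssubset_iff_subset_ne.mpr ⟨Finset.sdiff_subset, hUA⟩)
        split_ifs <;> linarith
    have hsum : ∑ A, l A * φ U ≤ ∑ A, (l A * φ (A ∩ U) + l A * H (U \ A) +
        (l A - if x ∈ A then l A else 0) * (φ U - H U)) := Finset.sum_le_sum fun A _ => by
      have := mul_le_mul_of_nonneg_left
        ((hφ.le_inter_add_sdiff U A).trans (add_le_add_right (hsdiff A) _)) (hl A)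
      split_ifs at this ⊢ <;> linarith
    rw [← Finset.sum_mul, Finset.sum_add_distrib, Finset.sum_add_distrib, ← Finset.sum_mul,
      Finset.sum_sub_distrib, ← Finset.sum_filter] at hsum
    have := mul_le_mul_of_nonneg_right (hcover x ((hφ.nonneg _).lt_of_ne' hx))
      (sub_pos.mpr hlt).le
    linarith [h U]

end IsSubmeasure

theorem rpow_sub_rpow_sub_le {a b Q : ℝ} (hb : 0 ≤ b) (hba : b ≤ a) (hQ : 1 ≤ Q) :
    a ^ Q - (a - b) ^ Q ≤ Q * (a ^ (Q - 1) * b) := by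
  have hQ0 : Q ≠ 0 := (zero_lt_one.trans_le hQ).ne'
  rcases (hb.trans hba).eq_or_lt with rfl | ha
  · simp [le_antisymm hba hb, Real.zero_rpow hQ0]
  have hbern := one_add_mul_self_le_rpow_one_add (s := -(b / a))
    (neg_le_neg ((div_le_one ha).mpr hba)) hQ
  have hpow : (a - b) ^ Q = a ^ Q * (1 + -(b / a)) ^ Q := by
    rw [← Real.mul_rpow ha.le, mul_add, mul_neg, mul_div_cancel₀ b ha.ne', mul_one, sub_eq_add_neg]
    linarith [(div_le_one ha).mpr hba]
  have hsplit : a ^ (Q - 1) * b = a ^ Q * (b / a) := by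
    rw [Real.rpow_sub_one ha.ne', mul_div_assoc', div_mul_eq_mul_div]
  rw [hpow, hsplit]
  linarith [mul_le_mul_of_nonneg_left hbern (Real.rpow_nonneg ha.le Q)]

theorem rpow_one_sub_mul_sub_one_rpow_le {Λ t : ℝ} (hΛ : 1 ≤ Λ) (ht0 : 0 ≤ t) (ht1 : t ≤ 1) :
    Λ ^ (1 - t) * (Λ - 1) ^ t ≤ Λ - t := by
  have hΛ0 : 0 < Λ := zero_lt_one.trans_le hΛ
  have h := Real.geom_mean_le_arith_mean2_weighted (sub_nonneg.mpr ht1) ht0 hΛ0.le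
    (sub_nonneg.mpr hΛ) (sub_add_cancel 1 t)
  linarith

namespace IsOptimalPair

variable [Fintype S] {μ : S → ℝ} {l : Finset S → ℝ} {Q : ℝ}

theorem sum_mono (h : IsOptimalPair φ μ l) {A B : Finset S} (hAB : A ⊆ B) :
    ∑ x ∈ A, μ x ≤ ∑ x ∈ B, μ x :=
  Finset.sum_le_sum_of_subset_of_nonneg hAB fun x _ _ => h.measure_nonneg x

theorem sum_measure_nonneg (h : IsOptimalPair φ μ l) (A : Finset S) : 0 ≤ ∑ x ∈ A, μ x :=
  Finset.sum_nonneg fun x _ => h.measure_nonneg x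

theorem sum_cover_mul_sum_inter (h : IsOptimalPair φ μ l) (U : Finset S) :
    ∑ A, l A * ∑ x ∈ A ∩ U, μ x = ∑ x ∈ U, μ x := by
  calc ∑ A, l A * ∑ x ∈ A ∩ U, μ x = ∑ A, ∑ x ∈ U, if x ∈ A then l A * μ x else 0 := by
        simp only [Finset.inter_comm, ← Finset.sum_ite_mem, Finset.mul_sum, mul_ite, mul_zero]
    _ = ∑ x ∈ U, (∑ A with x ∈ A, l A) * μ x := by
        rw [Finset.sum_comm]
        simp only [Finset.sum_filter, Finset.sum_mul, ite_mul, zero_mul]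
    _ = ∑ x ∈ U, μ x := Finset.sum_congr rfl fun x _ => by
        by_cases hx : μ x = 0
        · rw [hx, mul_zero]
        · rw [h.cover_eq_one x hx, one_mul]

theorem sum_cover_mul_sum_sdiff (h : IsOptimalPair φ μ l) (U : Finset S) :
    ∑ A, l A * ∑ x ∈ U \ A, μ x = (∑ A, l A - 1) * ∑ x ∈ U, μ x := by
  have hsplit : ∀ A, ∑ x ∈ U \ A, μ x = ∑ x ∈ U, μ x - ∑ x ∈ A ∩ U, μ x := fun A => by
    rw [eq_sub_iff_add_eq', Finset.inter_comm, Finset.sum_inter_add_sum_sdiff]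
  simp only [hsplit, mul_sub, Finset.sum_sub_distrib, h.sum_cover_mul_sum_inter, ← Finset.sum_mul,
    sub_mul, one_mul]

theorem apply_inter_le (hφ : IsSubmeasure φ) (hlow : HasLowerEstimate φ Q) (hQ : 1 < Q)
    (h : IsOptimalPair φ μ l) {A : Finset S} (hA : l A ≠ 0) (U : Finset S) :
    φ (A ∩ U) ≤ Q ^ Q⁻¹ * ((∑ x ∈ A, μ x) ^ (1 - Q⁻¹) * (∑ x ∈ A ∩ U, μ x) ^ Q⁻¹) := by
  have hQ0 : 0 < Q := zero_lt_one.trans hQ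
  have hsdiff : ∑ x ∈ A \ U, μ x = ∑ x ∈ A, μ x - ∑ x ∈ A ∩ U, μ x := by
    rw [eq_sub_iff_add_eq', Finset.sum_inter_add_sum_sdiff]
  have hpow : φ (A ∩ U) ^ Q ≤ Q * ((∑ x ∈ A, μ x) ^ (Q - 1) * ∑ x ∈ A ∩ U, μ x) := by
    have hle := hlow (A ∩ U) (A \ U) (Finset.disjoint_sdiff_inter A U).symm
    rw [Finset.union_comm, Finset.sdiff_union_inter, ← h.sum_eq A hA] at hle
    have hmono := Real.rpow_le_rpow (h.sum_measure_nonneg _) (h.sum_le (A \ U)) hQ0.le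
    rw [hsdiff] at hmono
    linarith [rpow_sub_rpow_sub_le (h.sum_measure_nonneg (A ∩ U))
      (h.sum_mono Finset.inter_subset_left) hQ.le]
  calc φ (A ∩ U) = (φ (A ∩ U) ^ Q) ^ Q⁻¹ := (Real.rpow_rpow_inv (hφ.nonneg _) hQ0.ne').symm
    _ ≤ (Q * ((∑ x ∈ A, μ x) ^ (Q - 1) * ∑ x ∈ A ∩ U, μ x)) ^ Q⁻¹ :=
        Real.rpow_le_rpow (Real.rpow_nonneg (hφ.nonneg _) _) hpow (inv_nonneg.mpr hQ0.le)
    _ = Q ^ Q⁻¹ * ((∑ x ∈ A, μ x) ^ (1 - Q⁻¹) * (∑ x ∈ A ∩ U, μ x) ^ Q⁻¹) := by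
        have hm := Real.rpow_nonneg (h.sum_measure_nonneg A) (Q - 1)
        rw [Real.mul_rpow hQ0.le (mul_nonneg hm (h.sum_measure_nonneg _)),
          Real.mul_rpow hm (h.sum_measure_nonneg _), ← Real.rpow_mul (h.sum_measure_nonneg _),
          sub_mul, mul_inv_cancel₀ hQ0.ne', one_mul]

theorem sum_cover_mul_apply_inter_le (hφ : IsSubmeasure φ) (hlow : HasLowerEstimate φ Q)
    (hQ : 1 < Q) (h : IsOptimalPair φ μ l) (U : Finset S) :
    ∑ A, l A * φ (A ∩ U) ≤ Q ^ Q⁻¹ * ((∑ x, μ x) ^ (1 - Q⁻¹) * (∑ x ∈ U, μ x) ^ Q⁻¹) := by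
  calc ∑ A, l A * φ (A ∩ U)
      ≤ ∑ A, Q ^ Q⁻¹ *
          (l A * ((∑ x ∈ A, μ x) ^ (1 - Q⁻¹) * (∑ x ∈ A ∩ U, μ x) ^ Q⁻¹)) :=
        Finset.sum_le_sum fun A _ => by
          rw [mul_left_comm]
          by_cases hA : l A = 0
          · rw [hA, zero_mul, zero_mul]
          · exact mul_le_mul_of_nonneg_left (h.apply_inter_le hφ hlow hQ hA U) (h.cover_nonneg A)
    _ ≤ Q ^ Q⁻¹ * ((∑ A, l A * ∑ x ∈ A, μ x) ^ (1 - Q⁻¹) *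
          (∑ A, l A * ∑ x ∈ A ∩ U, μ x) ^ Q⁻¹) := by
        rw [← Finset.mul_sum]
        refine mul_le_mul_of_nonneg_left ?_ (Real.rpow_nonneg (zero_lt_one.trans hQ).le _)
        exact sum_mul_rpow_mul_rpow_le _ (fun A _ => h.cover_nonneg A)
          (fun A _ => h.sum_measure_nonneg A) (fun A _ => h.sum_measure_nonneg _)
          (inv_pos.mpr (zero_lt_one.trans hQ)) (inv_lt_one_of_one_lt₀ hQ)
    _ = Q ^ Q⁻¹ * ((∑ x, μ x) ^ (1 - Q⁻¹) * (∑ x ∈ U, μ x) ^ Q⁻¹) := by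
        have huniv := h.sum_cover_mul_sum_inter Finset.univ
        simp only [Finset.inter_univ] at huniv
        rw [huniv, h.sum_cover_mul_sum_inter U]

theorem sum_cover_mul_rpow_sum_sdiff_le (h : IsOptimalPair φ μ l) {t : ℝ} (ht0 : 0 < t)
    (ht1 : t < 1) (hΛ : 1 ≤ ∑ A, l A) (U : Finset S) :
    ∑ A, l A * (∑ x ∈ U \ A, μ x) ^ t ≤ (∑ A, l A - t) * (∑ x ∈ U, μ x) ^ t := by
  have hholder := sum_mul_rpow_mul_rpow_le Finset.univ (a := fun _ => 1)
    (b := fun A => ∑ x ∈ U \ A, μ x) (fun A _ => h.cover_nonneg A) (fun _ _ => zero_le_one)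
    (fun A _ => h.sum_measure_nonneg _) ht0 ht1
  simp only [Real.one_rpow, one_mul, mul_one, h.sum_cover_mul_sum_sdiff] at hholder
  rw [Real.mul_rpow (sub_nonneg.mpr hΛ) (h.sum_measure_nonneg U), ← mul_assoc] at hholder
  exact hholder.trans (mul_le_mul_of_nonneg_right
    (rpow_one_sub_mul_sub_one_rpow_le hΛ ht0.le ht1.le)
    (Real.rpow_nonneg (h.sum_measure_nonneg U) t))

theorem apply_le (hφ : IsSubmeasure φ) (hlow : HasLowerEstimate φ Q) (hQ : 1 < Q)
    (h : IsOptimalPair φ μ l) (U : Finset S) :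
    φ U ≤ Q * Q ^ Q⁻¹ * (∑ x, μ x) ^ (1 - Q⁻¹) * (∑ x ∈ U, μ x) ^ Q⁻¹ := by
  have hQ0 : 0 < Q := zero_lt_one.trans hQ
  have hK : 0 ≤ Q * Q ^ Q⁻¹ * (∑ x, μ x) ^ (1 - Q⁻¹) :=
    mul_nonneg (by positivity) (Real.rpow_nonneg (h.sum_measure_nonneg _) _)
  have hH : ∀ U, 0 ≤ Q * Q ^ Q⁻¹ * (∑ x, μ x) ^ (1 - Q⁻¹) * (∑ x ∈ U, μ x) ^ Q⁻¹ := fun U =>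
    mul_nonneg hK (Real.rpow_nonneg (h.sum_measure_nonneg U) _)
  by_cases hnull : ∀ x, φ {x} = 0
  · exact (hφ.eq_zero_of_forall_singleton fun x _ => hnull x).trans_le (hH U)
  push Not at hnull
  obtain ⟨x, hx⟩ := hnull
  have hΛ : 1 ≤ ∑ A, l A := (h.one_le_cover x ((hφ.nonneg _).lt_of_ne' hx)).trans
    (Finset.sum_le_sum_of_subset_of_nonneg (Finset.filter_subset _ _)
      fun A _ _ => h.cover_nonneg A)
  refine hφ.le_of_fractionalCover hH h.cover_nonneg h.one_le_cover (fun U => ?_) U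
  have hinter := h.sum_cover_mul_apply_inter_le hφ hlow hQ U
  have hsdiff := mul_le_mul_of_nonneg_left (h.sum_cover_mul_rpow_sum_sdiff_le
    (inv_pos.mpr hQ0) (inv_lt_one_of_one_lt₀ hQ) hΛ U) hK
  rw [Finset.mul_sum] at hsdiff
  simp only [mul_left_comm (l _)]
  linear_combination hinter + hsdiff -
    Q ^ Q⁻¹ * (∑ x, μ x) ^ (1 - Q⁻¹) * (∑ x ∈ U, μ x) ^ Q⁻¹ * mul_inv_cancel₀ hQ0.ne'

end IsOptimalPair

theorem IsSubmeasure.exists_measure_le [Fintype S] {Q : ℝ} (hφ : IsSubmeasure φ)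
    (hlow : HasLowerEstimate φ Q) (hQ : 1 < Q) :
    ∃ μ : S → ℝ, (∀ x, 0 ≤ μ x) ∧ (∀ A, ∑ x ∈ A, μ x ≤ φ A) ∧
      φ Finset.univ ≤ Q ^ 2 * ∑ x, μ x := by
  obtain ⟨μ, l, h⟩ := hφ.exists_isOptimalPair
  have hQ0 : 0 < Q := zero_lt_one.trans hQ
  refine ⟨μ, h.measure_nonneg, h.sum_le, ?_⟩
  calc φ Finset.univ
      ≤ Q * Q ^ Q⁻¹ * (∑ x, μ x) ^ (1 - Q⁻¹) * (∑ x, μ x) ^ Q⁻¹ := h.apply_le hφ hlow hQ _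
    _ = Q * Q ^ Q⁻¹ * ∑ x, μ x := by
        rw [mul_assoc, ← Real.rpow_add_of_nonneg (h.sum_measure_nonneg _)
          (sub_nonneg.mpr (inv_lt_one_of_one_lt₀ hQ).le) (inv_nonneg.mpr hQ0.le), sub_add_cancel,
          Real.rpow_one]
    _ ≤ Q ^ 2 * ∑ x, μ x := by
        rw [sq]
        have := Real.rpow_le_rpow_of_exponent_le hQ.le (inv_lt_one_of_one_lt₀ hQ).le
        rw [Real.rpow_one] at this
        have := h.sum_measure_nonneg Finset.univ
        gcongr

end Submeasure

/-! ### A geometric scale of levels -/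

section Levels

variable {R θ : ℝ}

/-- The thresholds `y₀ < y₁ < ⋯` of a geometric scale of ratio `exp θ`. It starts at the point below
which `x ^ R ≤ 1 - R`. -/
noncomputable def levelThreshold (R θ : ℝ) (k : ℕ) : ℝ :=
  (1 - R) ^ R⁻¹ * Real.exp (k * θ)

/-- A slope `w` with `y ^ R ≤ 1 - R + R * (w * y)`. It is the smaller of the slope `1` provided by
the weighted AM-GM inequality and the slope, decaying in `y`, for which `R * (w * y) = y ^ R`. -/
noncomputable def youngWeight (R y : ℝ) : ℝ :=
  min 1 (y ^ (R - 1) / R)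

/-- The index `k` of the interval `(y_{k-1}, y_k]` of the scale `levelThreshold` that contains `x`,
and `0` when `0 ≤ x ≤ y₀`. -/
noncomputable def levelIndex (R θ x : ℝ) : ℕ :=
  ⌈Real.log (x / levelThreshold R θ 0) / θ⌉₊

/-- The values assumed on the intervals of the scale by a step function whose multiple dominates
the excess of `x ^ R` over `1 - R`. -/
noncomputable def levelHeight (R θ : ℝ) : ℕ → ℝ
  | 0 => 0
  | k + 1 => youngWeight R (levelThreshold R θ k) * levelThreshold R θ k

theorem levelThreshold_pos (hR1 : R < 1) (k : ℕ) : 0 < levelThreshold R θ k :=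
  mul_pos (Real.rpow_pos_of_pos (sub_pos.mpr hR1) _) (Real.exp_pos _)

theorem levelThreshold_succ (k : ℕ) :
    levelThreshold R θ (k + 1) = Real.exp θ * levelThreshold R θ k := by
  rw [levelThreshold, levelThreshold, Nat.cast_succ, add_one_mul, Real.exp_add]
  ring

theorem youngWeight_nonneg (hR0 : 0 ≤ R) {y : ℝ} (hy : 0 ≤ y) : 0 ≤ youngWeight R y :=
  le_min zero_le_one (div_nonneg (Real.rpow_nonneg hy _) hR0)

theorem measurable_levelIndex : Measurable (levelIndex R θ) :=
  Nat.measurable_ceil.comp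
    ((Real.measurable_log.comp (measurable_id.div_const _)).div_const _)

theorem levelIndex_mono (hR1 : R < 1) (hθ : 0 < θ) {x y : ℝ} (hx : 0 ≤ x) (hxy : x ≤ y) :
    levelIndex R θ x ≤ levelIndex R θ y := by
  rcases hx.eq_or_lt with rfl | hx
  · simp [levelIndex]
  have h0 := levelThreshold_pos (θ := θ) hR1 0
  unfold levelIndex
  gcongr

theorem le_levelThreshold_levelIndex (hR1 : R < 1) (hθ : 0 < θ) (x : ℝ) :
    x ≤ levelThreshold R θ (levelIndex R θ x) := by
  rcases le_or_gt x 0 with hx | hx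
  · exact hx.trans (levelThreshold_pos hR1 _).le
  have hle : Real.log (x / levelThreshold R θ 0) ≤ levelIndex R θ x * θ :=
    (div_le_iff₀ hθ).mp (Nat.le_ceil _)
  rw [Real.log_le_iff_le_exp (div_pos hx (levelThreshold_pos hR1 0)),
    div_le_iff₀' (levelThreshold_pos hR1 0)] at hle
  simpa [levelThreshold] using hle

theorem levelThreshold_le_of_levelIndex_eq_succ (hR1 : R < 1) (hθ : 0 < θ) {x : ℝ} (hx : 0 ≤ x)
    {k : ℕ} (hk : levelIndex R θ x = k + 1) : levelThreshold R θ k ≤ x := by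
  have hlt : (k : ℝ) < Real.log (x / levelThreshold R θ 0) / θ :=
    Nat.lt_ceil.mp (hk ▸ k.lt_succ_self : k < levelIndex R θ x)
  rcases hx.eq_or_lt with rfl | hx
  · rw [zero_div, Real.log_zero, zero_div] at hlt
    exact absurd hlt (not_lt.mpr k.cast_nonneg)
  rw [lt_div_iff₀ hθ, Real.lt_log_iff_exp_lt (div_pos hx (levelThreshold_pos hR1 0)),
    lt_div_iff₀' (levelThreshold_pos hR1 0)] at hlt
  simpa [levelThreshold] using hlt.le

theorem rpow_le_add_youngWeight (hR0 : 0 < R) (hR1 : R < 1) {s x y : ℝ} (hs : 1 ≤ s) (hx : 0 ≤ x)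
    (hy : 0 < y) (hxy : x ≤ s * y) : x ^ R ≤ 1 - R + R * (s * (youngWeight R y * y)) := by
  have hs0 : 0 ≤ s := zero_le_one.trans hs
  rcases min_choice 1 (y ^ (R - 1) / R) with h | h
  · have hamgm := Real.geom_mean_le_arith_mean2_weighted (sub_nonneg.mpr hR1.le) hR0.le
      zero_le_one hx (sub_add_cancel 1 R)
    rw [Real.one_rpow, one_mul, mul_one] at hamgm
    rw [youngWeight, h, one_mul]
    exact hamgm.trans (add_le_add_right (mul_le_mul_of_nonneg_left hxy hR0.le) _)
  · calc x ^ R ≤ (s * y) ^ R := Real.rpow_le_rpow hx hxy hR0.le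
      _ = s ^ R * y ^ R := Real.mul_rpow hs0 hy.le
      _ ≤ s * y ^ R := mul_le_mul_of_nonneg_right
          (Real.rpow_le_self_of_one_le hs hR1.le) (Real.rpow_nonneg hy.le R)
      _ = R * (s * (youngWeight R y * y)) := by
        rw [youngWeight, h, Real.rpow_sub_one hy.ne']
        field_simp
      _ ≤ 1 - R + R * (s * (youngWeight R y * y)) :=
        le_add_of_nonneg_left (sub_nonneg.mpr hR1.le)

theorem rpow_le_add_levelHeight (hR0 : 0 < R) (hR1 : R < 1) (hθ : 0 < θ) {x : ℝ} (hx : 0 ≤ x) :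
    x ^ R ≤ 1 - R + R * (Real.exp θ * levelHeight R θ (levelIndex R θ x)) := by
  have hle := le_levelThreshold_levelIndex hR1 hθ x
  rcases h : levelIndex R θ x with _ | k
  · have hbase : x ≤ (1 - R) ^ R⁻¹ := by simpa [h, levelThreshold] using hle
    simpa [levelHeight] using
      (Real.le_rpow_inv_iff_of_pos hx (sub_nonneg.mpr hR1.le) hR0).mp hbase
  · rw [h, levelThreshold_succ] at hle
    exact rpow_le_add_youngWeight hR0 hR1 (Real.one_le_exp hθ.le) hx
      (levelThreshold_pos hR1 k) hle

theorem one_le_exp_mul_sum_levelHeight (hR0 : 0 < R) (hR1 : R < 1) (hθ : 0 < θ) {ι : Type*}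
    [Fintype ι] {l ξ : ι → ℝ} (hl : ∀ i, 0 ≤ l i) (hl1 : ∑ i, l i = 1) (hξ : ∀ i, 0 ≤ ξ i)
    (hsum : ∑ i, l i * ξ i ^ R = 1) :
    1 ≤ Real.exp θ * ∑ i, l i * levelHeight R θ (levelIndex R θ (ξ i)) := by
  have hle : (1 : ℝ) ≤
      ∑ i, l i * (1 - R + R * (Real.exp θ * levelHeight R θ (levelIndex R θ (ξ i)))) :=
    hsum.ge.trans <| Finset.sum_le_sum fun i _ =>
      mul_le_mul_of_nonneg_left (rpow_le_add_levelHeight hR0 hR1 hθ (hξ i)) (hl i)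
  simp only [mul_add, Finset.sum_add_distrib, ← Finset.sum_mul, hl1, mul_left_comm (l _),
    ← Finset.mul_sum] at hle
  exact le_of_mul_le_mul_left (by linarith) hR0

/-- The logarithmic distance from the bottom of the scale at which `y ^ (R - 1) / R` drops below
`1`, so that the weights `youngWeight R` start to decay. -/
noncomputable def weightCrossover (R : ℝ) : ℝ :=
  Real.log (((1 - R) ^ R⁻¹) ^ (R - 1) / R) / (1 - R)

/-- The constant in the bound `sum_youngWeight_rpow_le`; the last term sums the geometric decay of
the weights above the crossover. -/
noncomputable def weightConstant (R : ℝ) : ℝ :=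
  weightCrossover R + 1 + (1 - Real.exp (R - 1))⁻¹

theorem one_le_rpow_sub_one_div (hR0 : 0 < R) (hR1 : R < 1) :
    1 ≤ ((1 - R) ^ R⁻¹) ^ (R - 1) / R := by
  have h1R : 0 < 1 - R := sub_pos.mpr hR1
  have hbase : (1 - R) ^ R⁻¹ ≤ 1 :=
    Real.rpow_le_one h1R.le (sub_le_self 1 hR0.le) (inv_nonneg.mpr hR0.le)
  rw [one_le_div hR0]
  exact hR1.le.trans (Real.one_le_rpow_of_pos_of_le_one_of_nonpos
    (Real.rpow_pos_of_pos h1R _) hbase (sub_neg.mpr hR1).le)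

theorem weightCrossover_nonneg (hR0 : 0 < R) (hR1 : R < 1) : 0 ≤ weightCrossover R :=
  div_nonneg (Real.log_nonneg (one_le_rpow_sub_one_div hR0 hR1)) (sub_nonneg.mpr hR1.le)

theorem one_le_weightConstant (hR0 : 0 < R) (hR1 : R < 1) : 1 ≤ weightConstant R := by
  have hgeom : 0 ≤ (1 - Real.exp (R - 1))⁻¹ :=
    inv_nonneg.mpr (sub_nonneg.mpr (Real.exp_le_one_iff.mpr (sub_neg.mpr hR1).le))
  rw [weightConstant]
  linarith [weightCrossover_nonneg hR0 hR1]

theorem youngWeight_levelThreshold_le (hR0 : 0 < R) (hR1 : R < 1) {j : ℕ}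
    (hj : weightCrossover R ≤ j * θ) (i : ℕ) :
    youngWeight R (levelThreshold R θ (j + i)) ≤ Real.exp ((R - 1) * (i * θ)) := by
  have h1R : 0 < 1 - R := sub_pos.mpr hR1
  have hD := zero_lt_one.trans_le (one_le_rpow_sub_one_div hR0 hR1)
  refine (min_le_right _ _).trans ?_
  calc levelThreshold R θ (j + i) ^ (R - 1) / R
      = ((1 - R) ^ R⁻¹) ^ (R - 1) / R * Real.exp ((R - 1) * ((j + i : ℕ) * θ)) := by
        rw [levelThreshold, Real.mul_rpow (Real.rpow_nonneg h1R.le _) (Real.exp_pos _).le,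
          ← Real.exp_mul, mul_comm _ (R - 1)]
        ring
    _ ≤ Real.exp (j * θ * (1 - R)) * Real.exp ((R - 1) * ((j + i : ℕ) * θ)) := by
        gcongr
        exact (Real.log_le_iff_le_exp hD).mp ((div_le_iff₀ h1R).mp hj)
    _ = Real.exp ((R - 1) * (i * θ)) := by
        rw [← Real.exp_add]
        push_cast
        ring_nf

theorem youngWeight_rpow_le_geometric (hR0 : 0 < R) (hR1 : R < 1) (hθ : 0 < θ) {j : ℕ}
    (hj : weightCrossover R ≤ j * θ) (i : ℕ) :
    youngWeight R (levelThreshold R θ (j + i)) ^ ((1 + θ) / θ) ≤ Real.exp (R - 1) ^ i := by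
  calc youngWeight R (levelThreshold R θ (j + i)) ^ ((1 + θ) / θ)
      ≤ Real.exp ((R - 1) * (i * θ)) ^ ((1 + θ) / θ) :=
        Real.rpow_le_rpow (youngWeight_nonneg hR0.le (levelThreshold_pos hR1 _).le)
          (youngWeight_levelThreshold_le hR0 hR1 hj i) (by positivity)
    _ = Real.exp (i * (R - 1) + (R - 1) * (i * θ)) := by
        rw [← Real.exp_mul]
        congr 1
        field_simp
    _ ≤ Real.exp (i * (R - 1)) := Real.exp_le_exp.mpr (add_le_of_nonpos_right
        (mul_nonpos_of_nonpos_of_nonneg (sub_neg.mpr hR1).le (by positivity)))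
    _ = Real.exp (R - 1) ^ i := Real.exp_nat_mul _ _

theorem sum_youngWeight_rpow_le (hR0 : 0 < R) (hR1 : R < 1) (hθ : 0 < θ) (m : ℕ) :
    ∑ k ∈ Finset.range m, youngWeight R (levelThreshold R θ k) ^ ((1 + θ) / θ) ≤
      weightConstant R * ((1 + θ) / θ) := by
  have hL := weightCrossover_nonneg hR0 hR1
  have hρ : Real.exp (R - 1) < 1 := Real.exp_lt_one_iff.mpr (sub_neg.mpr hR1)
  have hw : ∀ k, 0 ≤ youngWeight R (levelThreshold R θ k) := fun k =>
    youngWeight_nonneg hR0.le (levelThreshold_pos hR1 k).le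
  calc ∑ k ∈ Finset.range m, youngWeight R (levelThreshold R θ k) ^ ((1 + θ) / θ)
      ≤ ∑ k ∈ Finset.range (⌈weightCrossover R / θ⌉₊ + m),
          youngWeight R (levelThreshold R θ k) ^ ((1 + θ) / θ) :=
        Finset.sum_le_sum_of_subset_of_nonneg (Finset.range_subset_range.mpr (Nat.le_add_left _ _))
          fun k _ _ => Real.rpow_nonneg (hw k) _
    _ ≤ ∑ _k ∈ Finset.range ⌈weightCrossover R / θ⌉₊, 1 +
          ∑ i ∈ Finset.range m, Real.exp (R - 1) ^ i := by
        rw [Finset.sum_range_add]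
        exact add_le_add
          (Finset.sum_le_sum fun k _ => Real.rpow_le_one (hw k) (min_le_left _ _) (by positivity))
          (Finset.sum_le_sum fun i _ => youngWeight_rpow_le_geometric hR0 hR1 hθ
            ((div_le_iff₀ hθ).mp (Nat.le_ceil (weightCrossover R / θ))) i)
    _ ≤ (weightCrossover R / θ + 1) + (1 - Real.exp (R - 1))⁻¹ := by
        refine add_le_add ?_ ?_
        · simpa using (Nat.ceil_lt_add_one (div_nonneg hL hθ.le)).le
        · rw [← tsum_geometric_of_lt_one (Real.exp_pos _).le hρ]
          exact (summable_geometric_of_lt_one (Real.exp_pos _).le hρ).sum_le_tsum _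
            fun i _ => by positivity
    _ ≤ weightConstant R * ((1 + θ) / θ) := by
        have hgeom : 0 ≤ (1 - Real.exp (R - 1))⁻¹ := inv_nonneg.mpr (sub_nonneg.mpr hρ.le)
        have hexpand : weightConstant R * ((1 + θ) / θ) =
            weightCrossover R / θ + 1 + (1 - Real.exp (R - 1))⁻¹ +
            (weightCrossover R + 1 / θ + (1 - Real.exp (R - 1))⁻¹ / θ) := by
          rw [weightConstant]
          field_simp
          ring
        rw [hexpand]
        exact le_add_of_nonneg_right
          (add_nonneg (add_nonneg hL (one_div_nonneg.mpr hθ.le)) (div_nonneg hgeom hθ.le))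

theorem sum_youngWeight_mul_le (hR0 : 0 < R) (hR1 : R < 1) (hθ : 0 < θ) {m : ℕ} {v : ℕ → ℝ}
    (hv : ∀ k, 0 ≤ v k) (hsum : ∑ k ∈ Finset.range m, v k ^ (1 + θ) ≤ 1) :
    ∑ k ∈ Finset.range m, youngWeight R (levelThreshold R θ k) * v k ≤
      (weightConstant R * ((1 + θ) / θ)) ^ (θ / (1 + θ)) := by
  have hconj : ((1 + θ) / θ).HolderConjugate (1 + θ) :=
    Real.holderConjugate_iff.mpr ⟨(one_lt_div hθ).mpr (lt_one_add θ), by field_simp; ring⟩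
  have hw : ∀ k, 0 ≤ youngWeight R (levelThreshold R θ k) := fun k =>
    youngWeight_nonneg hR0.le (levelThreshold_pos hR1 k).le
  have hvQ : ∀ k ∈ Finset.range m, 0 ≤ v k ^ (1 + θ) := fun k _ => Real.rpow_nonneg (hv k) _
  have hwQ : ∀ k ∈ Finset.range m, 0 ≤ youngWeight R (levelThreshold R θ k) ^ ((1 + θ) / θ) :=
    fun k _ => Real.rpow_nonneg (hw k) _
  refine (Real.inner_le_Lp_mul_Lq_of_nonneg _ hconj (fun k _ => hw k) fun k _ => hv k).trans ?_
  rw [one_div_div]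
  refine (mul_le_of_le_one_right (Real.rpow_nonneg (Finset.sum_nonneg hwQ) _) <|
    Real.rpow_le_one (Finset.sum_nonneg hvQ) hsum (by positivity)).trans ?_
  exact Real.rpow_le_rpow (Finset.sum_nonneg hwQ) (sum_youngWeight_rpow_le hR0 hR1 hθ m)
    (by positivity)

theorem sum_mul_levelHeight_eq {S : Type*} [Fintype S] (μ : S → ℝ) {ℓ : S → ℕ} {m : ℕ}
    (hℓ : ∀ s, ℓ s ≤ m) :
    ∑ s, μ s * levelHeight R θ (ℓ s) =
      ∑ k ∈ Finset.range m, levelHeight R θ (k + 1) * ∑ s with ℓ s = k + 1, μ s := by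
  have hfiber : ∀ j, ∑ s with ℓ s = j, μ s * levelHeight R θ (ℓ s) =
      levelHeight R θ j * ∑ s with ℓ s = j, μ s := fun j => by
    rw [Finset.mul_sum]
    refine Finset.sum_congr rfl fun s hs => ?_
    rw [(Finset.mem_filter.mp hs).2, mul_comm]
  rw [← Finset.sum_fiberwise_of_maps_to (t := Finset.range (m + 1)) fun s _ =>
    Finset.mem_range_succ_iff.mpr (hℓ s)]
  simp_rw [hfiber]
  rw [Finset.sum_range_succ', levelHeight, zero_mul, add_zero]

end Levels

section ConvexCombination

theorem sum_le_mul_of_one_le_mul_sum {S ι : Type*} [Fintype S] [Fintype ι] {μ : S → ℝ}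
    {l : ι → ℝ} {H : ι → S → ℝ} {c W : ℝ} (hμ : ∀ s, 0 ≤ μ s) (hl : ∀ i, 0 ≤ l i)
    (hl1 : ∑ i, l i = 1) (hc : 0 ≤ c) (hone : ∀ s, μ s ≠ 0 → 1 ≤ c * ∑ i, l i * H i s)
    (hW : ∀ i, ∑ s, μ s * H i s ≤ W) : ∑ s, μ s ≤ c * W := by
  calc ∑ s, μ s ≤ ∑ s, μ s * (c * ∑ i, l i * H i s) := Finset.sum_le_sum fun s _ => by
        rcases eq_or_ne (μ s) 0 with h | h
        · simp [h]
        · exact le_mul_of_one_le_right (hμ s) (hone s h)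
    _ = c * ∑ i, l i * ∑ s, μ s * H i s := by
        simp only [Finset.mul_sum]
        rw [Finset.sum_comm]
        exact Finset.sum_congr rfl fun i _ => Finset.sum_congr rfl fun s _ => by ring
    _ ≤ c * ∑ i, l i * W := mul_le_mul_of_nonneg_left
        (Finset.sum_le_sum fun i _ => mul_le_mul_of_nonneg_left (hW i) (hl i)) hc
    _ = c * W := by rw [← Finset.sum_mul, hl1, one_mul]

end ConvexCombination

/-! ### The mass of a function on a set -/

section DisjointSupport

variable {Ω : Type*}

theorem disjSupp_indicator {n : ℕ} {A : Fin n → Set Ω} (hA : Pairwise (Function.onFun Disjoint A))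
    (f : Ω → ℝ) : DisjSupp fun i => (A i).indicator f := by
  intro i j hij x
  by_cases hx : x ∈ A i
  · exact Or.inr (indicator_of_notMem (disjoint_left.mp (hA hij) hx) f)
  · exact Or.inl (indicator_of_notMem hx f)

theorem sum_indicator_eq_indicator_iUnion {n : ℕ} {A : Fin n → Set Ω}
    (hA : Pairwise (Function.onFun Disjoint A)) (f : Ω → ℝ) :
    (fun x => ∑ i, (A i).indicator f x) = (⋃ i, A i).indicator f := by
  simpa using (Finset.indicator_biUnion Finset.univ A fun i _ j _ hij => hA hij).symm

theorem iUnion_pair (A B : Set Ω) : ⋃ i, ![A, B] i = A ∪ B := by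
  ext x
  simp [Fin.exists_fin_two]

theorem pairwise_disjoint_pair {A B : Set Ω} (hAB : Disjoint A B) :
    Pairwise (Function.onFun Disjoint ![A, B]) := by
  simp [Pairwise, Fin.forall_fin_two, Function.onFun, hAB, hAB.symm]

end DisjointSupport

section Mass

variable {Ω : Type*} [TopologicalSpace Ω] [MeasurableSpace Ω] {X : AdmissibleQuasinorm Ω}
  {p q Q : ℝ}

namespace AdmissibleQuasinorm

theorem N_zero (X : AdmissibleQuasinorm Ω) : X.N 0 = 0 := by
  have h := X.smul 0 0 measurable_zero
  simp only [zero_mul, abs_zero, ENNReal.ofReal_zero] at h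
  exact h

theorem N_indicator_le (X : AdmissibleQuasinorm Ω) {f g : Ω → ℝ} (hf : Measurable f)
    (hg : Measurable g) {A : Set Ω} (hA : MeasurableSet A) (hfg : ∀ x ∈ A, |f x| ≤ |g x|) :
    X.N (A.indicator f) ≤ X.N (A.indicator g) :=
  X.mono _ _ (hf.indicator hA) (hg.indicator hA) fun x => by
    by_cases hx : x ∈ A <;> simp [hx, hfg]

theorem N_indicator_mono (X : AdmissibleQuasinorm Ω) {f : Ω → ℝ} (hf : Measurable f)
    {A B : Set Ω} (hA : MeasurableSet A) (hB : MeasurableSet B) (hAB : A ⊆ B) :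
    X.N (A.indicator f) ≤ X.N (B.indicator f) :=
  X.mono _ _ (hf.indicator hA) (hf.indicator hB) fun x => by
    by_cases hx : x ∈ A
    · simp [hx, hAB hx]
    · simp [hx]

theorem N_indicator_le_N (X : AdmissibleQuasinorm Ω) {f : Ω → ℝ} (hf : Measurable f)
    {A : Set Ω} (hA : MeasurableSet A) : X.N (A.indicator f) ≤ X.N f := by
  simpa using X.N_indicator_mono hf hA .univ A.subset_univ

end AdmissibleQuasinorm

theorem CrudeUpper.N_indicator_iUnion_rpow_le (hU : CrudeUpper X p 1) (hp : 0 < p) {n : ℕ}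
    {A : Fin n → Set Ω} (hA : ∀ i, MeasurableSet (A i))
    (hdisj : Pairwise (Function.onFun Disjoint A)) {f : Ω → ℝ} (hf : Measurable f) :
    X.N ((⋃ i, A i).indicator f) ^ p ≤ ∑ i, X.N ((A i).indicator f) ^ p := by
  have h := hU n _ (fun i => hf.indicator (hA i)) (disjSupp_indicator hdisj f)
  rwa [sum_indicator_eq_indicator_iUnion hdisj, ENNReal.ofReal_one, one_mul, one_div,
    ENNReal.le_rpow_inv_iff hp] at h

theorem CrudeLower.sum_N_indicator_rpow_le (hL : CrudeLower X q 1) (hq : 0 < q) {n : ℕ}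
    {A : Fin n → Set Ω} (hA : ∀ i, MeasurableSet (A i))
    (hdisj : Pairwise (Function.onFun Disjoint A)) {f : Ω → ℝ} (hf : Measurable f) :
    ∑ i, X.N ((A i).indicator f) ^ q ≤ X.N ((⋃ i, A i).indicator f) ^ q := by
  have h := hL n _ (fun i => hf.indicator (hA i)) (disjSupp_indicator hdisj f)
  rwa [sum_indicator_eq_indicator_iUnion hdisj, ENNReal.ofReal_one, one_mul, one_div,
    ENNReal.rpow_inv_le_iff hq] at h

theorem CrudeUpper.N_ne_top_of_forall_exists_abs_le (hU : CrudeUpper X p 1) (hp : 0 < p) {n : ℕ}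
    {g : Fin n → Ω → ℝ} (hg : ∀ i, Measurable (g i)) (hgtop : ∀ i, X.N (g i) ≠ ⊤) {f : Ω → ℝ}
    (hf : Measurable f) (hle : ∀ x, ∃ i, |f x| ≤ |g i x|) : X.N f ≠ ⊤ := by
  let A : Fin n → Set Ω := disjointed fun i => {x | |f x| ≤ |g i x|}
  have hA : ∀ i, MeasurableSet (A i) := fun i =>
    disjointedRec (fun _ _ hs => hs.diff (measurableSet_le hf.abs (hg _).abs))
      (measurableSet_le hf.abs (hg i).abs)
  have hcover : ⋃ i, A i = univ :=
    iUnion_disjointed.trans (eq_univ_of_forall fun x => mem_iUnion.mpr (hle x))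
  have hsum := hU.N_indicator_iUnion_rpow_le hp hA (disjoint_disjointed _) hf
  rw [hcover, indicator_univ] at hsum
  have hpiece : ∀ i, X.N ((A i).indicator f) ≠ ⊤ := fun i => ne_top_of_le_ne_top (hgtop i) <|
    (X.N_indicator_le hf (hg i) (hA i) fun _ hx => disjointed_subset _ i hx).trans
      (X.N_indicator_le_N (hg i) (hA i))
  have hfin : X.N f ^ p ≠ ⊤ := ne_top_of_le_ne_top
    (ENNReal.sum_ne_top.mpr fun i _ => ENNReal.rpow_ne_top_of_nonneg hp.le (hpiece i)) hsum
  exact fun htop => hfin ((ENNReal.rpow_eq_top_iff_of_pos hp).mpr htop)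

/-- The set function `A ↦ ‖A.indicator f‖ ^ p`; it takes the junk value `0` where that quantity is
infinite. -/
noncomputable def AdmissibleQuasinorm.massOn (X : AdmissibleQuasinorm Ω) (p : ℝ) (f : Ω → ℝ)
    (A : Set Ω) : ℝ :=
  (X.N (A.indicator f) ^ p).toReal

namespace AdmissibleQuasinorm

theorem massOn_nonneg (X : AdmissibleQuasinorm Ω) (p : ℝ) (f : Ω → ℝ) (A : Set Ω) :
    0 ≤ X.massOn p f A :=
  ENNReal.toReal_nonneg

theorem massOn_eq_zero (hp : 0 < p) {f : Ω → ℝ} {A : Set Ω} (hf : ∀ x ∈ A, f x = 0) :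
    X.massOn p f A = 0 := by
  rw [massOn, indicator_eq_zero'.mpr]
  · simp [N_zero, hp]
  · exact disjoint_left.mpr fun x hx hxA => hx (hf x hxA)

theorem massOn_univ (X : AdmissibleQuasinorm Ω) (p : ℝ) (f : Ω → ℝ) :
    X.massOn p f univ = (X.N f ^ p).toReal := by
  rw [massOn, indicator_univ]

theorem N_indicator_rpow_ne_top (hp : 0 ≤ p) {f : Ω → ℝ} (hf : Measurable f) (hfin : X.N f ≠ ⊤)
    {A : Set Ω} (hA : MeasurableSet A) : X.N (A.indicator f) ^ p ≠ ⊤ :=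
  ENNReal.rpow_ne_top_of_nonneg hp (ne_top_of_le_ne_top hfin (X.N_indicator_le_N hf hA))

theorem massOn_mono (hp : 0 ≤ p) {f : Ω → ℝ} (hf : Measurable f) (hfin : X.N f ≠ ⊤) {A B : Set Ω}
    (hA : MeasurableSet A) (hB : MeasurableSet B) (hAB : A ⊆ B) :
    X.massOn p f A ≤ X.massOn p f B :=
  ENNReal.toReal_mono (N_indicator_rpow_ne_top hp hf hfin hB)
    (ENNReal.rpow_le_rpow (X.N_indicator_mono hf hA hB hAB) hp)

theorem mul_massOn_le_massOn (hp : 0 < p) {f g : Ω → ℝ} (hf : Measurable f) (hg : Measurable g)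
    (hfin : X.N g ≠ ⊤) {A : Set Ω} (hA : MeasurableSet A) {c : ℝ} (hc : 0 ≤ c)
    (hfg : ∀ x ∈ A, c * |f x| ^ p ≤ |g x| ^ p) : c * X.massOn p f A ≤ X.massOn p g A := by
  have hroot : 0 ≤ c ^ p⁻¹ := Real.rpow_nonneg hc _
  have hle : ∀ x ∈ A, |c ^ p⁻¹ * f x| ≤ |g x| := fun x hx => by
    rw [abs_mul, abs_of_nonneg hroot, ← Real.rpow_le_rpow_iff (by positivity) (abs_nonneg _) hp,
      Real.mul_rpow hroot (abs_nonneg _), Real.rpow_inv_rpow hc hp.ne']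
    exact hfg x hx
  have hsmul : X.N (A.indicator fun x => c ^ p⁻¹ * f x) =
      ENNReal.ofReal (c ^ p⁻¹) * X.N (A.indicator f) := by
    rw [funext (indicator_const_mul A f _), X.smul _ _ (hf.indicator hA), abs_of_nonneg hroot]
  have hN := ENNReal.rpow_le_rpow (X.N_indicator_le (hf.const_mul _) hg hA hle) hp.le
  rw [hsmul, ENNReal.mul_rpow_of_nonneg _ _ hp.le, ENNReal.ofReal_rpow_of_nonneg hroot hp.le,
    Real.rpow_inv_rpow hc hp.ne'] at hN
  simpa [massOn, ENNReal.toReal_mul, ENNReal.toReal_ofReal hc] using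
    ENNReal.toReal_mono (N_indicator_rpow_ne_top hp.le hg hfin hA) hN

end AdmissibleQuasinorm

theorem CrudeUpper.massOn_iUnion_le (hU : CrudeUpper X p 1) (hp : 0 < p) {n : ℕ}
    {A : Fin n → Set Ω} (hA : ∀ i, MeasurableSet (A i))
    (hdisj : Pairwise (Function.onFun Disjoint A)) {f : Ω → ℝ} (hf : Measurable f)
    (hfin : X.N f ≠ ⊤) : X.massOn p f (⋃ i, A i) ≤ ∑ i, X.massOn p f (A i) := by
  have hpiece : ∀ i ∈ Finset.univ, X.N ((A i).indicator f) ^ p ≠ ⊤ := fun i _ =>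
    X.N_indicator_rpow_ne_top hp.le hf hfin (hA i)
  simp only [AdmissibleQuasinorm.massOn]
  rw [← ENNReal.toReal_sum hpiece]
  exact ENNReal.toReal_mono (ENNReal.sum_ne_top.mpr hpiece)
    (hU.N_indicator_iUnion_rpow_le hp hA hdisj hf)

theorem CrudeLower.sum_massOn_rpow_le (hL : CrudeLower X (p * Q) 1) (hp : 0 < p) (hQ : 0 < Q)
    {n : ℕ} {A : Fin n → Set Ω} (hA : ∀ i, MeasurableSet (A i))
    (hdisj : Pairwise (Function.onFun Disjoint A)) {f : Ω → ℝ} (hf : Measurable f)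
    (hfin : X.N f ≠ ⊤) : ∑ i, X.massOn p f (A i) ^ Q ≤ X.massOn p f (⋃ i, A i) ^ Q := by
  have hq : 0 < p * Q := mul_pos hp hQ
  simp only [AdmissibleQuasinorm.massOn, ENNReal.toReal_rpow, ← ENNReal.rpow_mul]
  rw [← ENNReal.toReal_sum fun i _ => X.N_indicator_rpow_ne_top hq.le hf hfin (hA i)]
  exact ENNReal.toReal_mono (X.N_indicator_rpow_ne_top hq.le hf hfin (.iUnion hA))
    (hL.sum_N_indicator_rpow_le hq hA hdisj hf)

theorem CrudeUpper.massOn_union_le (hU : CrudeUpper X p 1) (hp : 0 < p) {A B : Set Ω}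
    (hA : MeasurableSet A) (hB : MeasurableSet B) (hAB : Disjoint A B) {f : Ω → ℝ}
    (hf : Measurable f) (hfin : X.N f ≠ ⊤) :
    X.massOn p f (A ∪ B) ≤ X.massOn p f A + X.massOn p f B := by
  simpa [iUnion_pair] using hU.massOn_iUnion_le hp (Fin.forall_fin_two.mpr ⟨hA, hB⟩)
    (pairwise_disjoint_pair hAB) hf hfin

theorem CrudeLower.massOn_rpow_add_le (hL : CrudeLower X (p * Q) 1) (hp : 0 < p) (hQ : 0 < Q)
    {A B : Set Ω} (hA : MeasurableSet A) (hB : MeasurableSet B) (hAB : Disjoint A B) {f : Ω → ℝ}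
    (hf : Measurable f) (hfin : X.N f ≠ ⊤) :
    X.massOn p f A ^ Q + X.massOn p f B ^ Q ≤ X.massOn p f (A ∪ B) ^ Q := by
  simpa [iUnion_pair] using hL.sum_massOn_rpow_le hp hQ (Fin.forall_fin_two.mpr ⟨hA, hB⟩)
    (pairwise_disjoint_pair hAB) hf hfin

end Mass

section Labels

variable {Ω S : Type*} [TopologicalSpace Ω] [MeasurableSpace Ω] [MeasurableSpace S]
  [DiscreteMeasurableSpace S] {X : AdmissibleQuasinorm Ω} {p Q R θ : ℝ} {f g : Ω → ℝ} {κ : Ω → S}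

theorem CrudeUpper.isSubmeasure_massOn_preimage [DecidableEq S] (hU : CrudeUpper X p 1)
    (hp : 0 < p) (hf : Measurable f) (hfin : X.N f ≠ ⊤) (hκ : Measurable κ) :
    IsSubmeasure fun A : Finset S => X.massOn p f (κ ⁻¹' A) where
  empty := X.massOn_eq_zero hp (by simp)
  mono A B hAB := X.massOn_mono hp.le hf hfin (hκ .of_discrete) (hκ .of_discrete)
    (preimage_mono (Finset.coe_subset.mpr hAB))
  union_le A B hAB := by
    rw [Finset.coe_union, preimage_union]
    exact hU.massOn_union_le hp (hκ .of_discrete) (hκ .of_discrete)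
      ((Finset.disjoint_coe.mpr hAB).preimage κ) hf hfin

theorem CrudeLower.hasLowerEstimate_massOn_preimage [DecidableEq S] (hL : CrudeLower X (p * Q) 1)
    (hp : 0 < p) (hQ : 0 < Q) (hf : Measurable f) (hfin : X.N f ≠ ⊤) (hκ : Measurable κ) :
    HasLowerEstimate (fun A : Finset S => X.massOn p f (κ ⁻¹' A)) Q := by
  intro A B hAB
  simp only [Finset.coe_union, preimage_union]
  exact hL.massOn_rpow_add_le hp hQ (hκ .of_discrete) (hκ .of_discrete)
    ((Finset.disjoint_coe.mpr hAB).preimage κ) hf hfin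

theorem exists_measure_le_massOn [Fintype S] (hU : CrudeUpper X p 1)
    (hL : CrudeLower X (p * Q) 1) (hp : 0 < p) (hQ : 1 < Q) (hf : Measurable f)
    (hfin : X.N f ≠ ⊤) (hκ : Measurable κ) :
    ∃ μ : S → ℝ, (∀ s, 0 ≤ μ s) ∧
      (∀ A : Finset S, ∑ s ∈ A, μ s ≤ X.massOn p f (κ ⁻¹' A)) ∧
      X.massOn p f univ ≤ Q ^ 2 * ∑ s, μ s := by
  classical
  simpa using (hU.isSubmeasure_massOn_preimage hp hf hfin hκ).exists_measure_le
    (hL.hasLowerEstimate_massOn_preimage hp (zero_lt_one.trans hQ) hf hfin hκ) hQ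

theorem levelThreshold_mul_sum_le_massOn [Fintype S] (hp : 0 < p) (hR1 : R < 1)
    (hf : Measurable f) (hg : Measurable g) (hfin : X.N g ≠ ⊤) (hκ : Measurable κ) {μ : S → ℝ}
    (hμ : ∀ A : Finset S, ∑ s ∈ A, μ s ≤ X.massOn p f (κ ⁻¹' A)) {ℓ : S → ℕ} {k : ℕ}
    (hℓ : ∀ x, ℓ (κ x) = k + 1 → levelThreshold R θ k * |f x| ^ p ≤ |g x| ^ p) :
    levelThreshold R θ k * ∑ s with ℓ s = k + 1, μ s ≤
      X.massOn p g (κ ⁻¹' {s | ℓ s = k + 1}) := by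
  have hy := (levelThreshold_pos (θ := θ) hR1 k).le
  have hle := hμ {s | ℓ s = k + 1}
  rw [Finset.coe_filter_univ] at hle
  exact (mul_le_mul_of_nonneg_left hle hy).trans
    (X.mul_massOn_le_massOn hp hf hg hfin (hκ .of_discrete) hy hℓ)

theorem CrudeLower.sum_massOn_level_rpow_le_one (hL : CrudeLower X (p * Q) 1) (hp : 0 < p)
    (hQ : 0 < Q) (hg : Measurable g) (hN : X.N g ≤ 1) (hκ : Measurable κ) (ℓ : S → ℕ) (m : ℕ) :
    ∑ k ∈ Finset.range m, X.massOn p g (κ ⁻¹' {s | ℓ s = k + 1}) ^ Q ≤ 1 := by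
  have hdisj : Pairwise (Function.onFun Disjoint
      fun k : Fin m => κ ⁻¹' {s | ℓ s = (k : ℕ) + 1}) := by
    intro k l hkl
    refine Disjoint.preimage κ (disjoint_left.mpr fun s hk hl => hkl (Fin.ext ?_))
    exact Nat.succ_injective (Eq.trans (Eq.symm hk) hl)
  rw [Finset.sum_range]
  refine (hL.sum_massOn_rpow_le hp hQ (fun k => hκ .of_discrete) hdisj hg
    (ne_top_of_le_ne_top ENNReal.one_ne_top hN)).trans ?_
  refine Real.rpow_le_one (X.massOn_nonneg _ _ _) (ENNReal.toReal_le_of_le_ofReal zero_le_one ?_)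
    hQ.le
  rw [ENNReal.ofReal_one]
  exact ENNReal.rpow_le_one ((X.N_indicator_le_N hg (.iUnion fun k => hκ .of_discrete)).trans hN)
    hp.le

theorem sum_mul_levelHeight_le [Fintype S] (hL : CrudeLower X (p * (1 + θ)) 1) (hp : 0 < p)
    (hR0 : 0 < R) (hR1 : R < 1) (hθ : 0 < θ) (hf : Measurable f) (hg : Measurable g)
    (hN : X.N g ≤ 1) (hκ : Measurable κ) {μ : S → ℝ}
    (hμ : ∀ A : Finset S, ∑ s ∈ A, μ s ≤ X.massOn p f (κ ⁻¹' A)) {ℓ : S → ℕ}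
    (hℓ : ∀ x k, ℓ (κ x) = k + 1 → levelThreshold R θ k * |f x| ^ p ≤ |g x| ^ p) :
    ∑ s, μ s * levelHeight R θ (ℓ s) ≤ (weightConstant R * ((1 + θ) / θ)) ^ (θ / (1 + θ)) := by
  have hfin := ne_top_of_le_ne_top ENNReal.one_ne_top hN
  have hbound : ∀ s, ℓ s ≤ Finset.univ.sup ℓ := fun s => Finset.le_sup (Finset.mem_univ s)
  rw [sum_mul_levelHeight_eq μ hbound]
  refine (Finset.sum_le_sum fun k _ => ?_).trans (sum_youngWeight_mul_le hR0 hR1 hθ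
    (fun k => X.massOn_nonneg p g (κ ⁻¹' {s | ℓ s = k + 1}))
    (hL.sum_massOn_level_rpow_le_one hp (by positivity) hg hN hκ ℓ _))
  rw [levelHeight, mul_assoc]
  exact mul_le_mul_of_nonneg_left
    (levelThreshold_mul_sum_le_massOn hp hR1 hf hg hfin hκ hμ fun x => hℓ x k)
    (youngWeight_nonneg hR0.le (levelThreshold_pos hR1 k).le)

end Labels

/-! ### Power means -/

section PowerMean

variable {Ω ι : Type*} [Fintype ι] {p r : ℝ} {l : ι → ℝ} {g : ι → Ω → ℝ}

/-- The power mean `(∑ lᵢ |gᵢ| ^ r) ^ (1 / r)` of the functions `gᵢ` with weights `lᵢ`. -/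
noncomputable def powerMean (r : ℝ) (l : ι → ℝ) (g : ι → Ω → ℝ) (x : Ω) : ℝ :=
  (∑ i, l i * |g i x| ^ r) ^ r⁻¹

/-- The size of `gᵢ` relative to the power mean, on the scale of `p`-th powers; it takes the junk
value `0` where the power mean vanishes. -/
noncomputable def powerMeanRatio (p r : ℝ) (l : ι → ℝ) (g : ι → Ω → ℝ) (i : ι) (x : Ω) : ℝ :=
  (|g i x| / powerMean r l g x) ^ p

theorem measurable_powerMean [MeasurableSpace Ω] (hg : ∀ i, Measurable (g i)) :
    Measurable (powerMean r l g) :=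
  (Finset.measurable_sum _ fun i _ => ((hg i).abs.pow_const r).const_mul (l i)).pow_const _

theorem measurable_powerMeanRatio [MeasurableSpace Ω] (hg : ∀ i, Measurable (g i)) (i : ι) :
    Measurable (powerMeanRatio p r l g i) :=
  ((hg i).abs.div (measurable_powerMean hg)).pow_const p

section Nonneg

variable (hl : ∀ i, 0 ≤ l i)
include hl

theorem sum_mul_abs_rpow_nonneg (x : Ω) : 0 ≤ ∑ i, l i * |g i x| ^ r :=
  Finset.sum_nonneg fun i _ => mul_nonneg (hl i) (Real.rpow_nonneg (abs_nonneg _) r)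

theorem powerMean_nonneg (x : Ω) : 0 ≤ powerMean r l g x :=
  Real.rpow_nonneg (sum_mul_abs_rpow_nonneg hl x) _

theorem powerMean_rpow (hr : 0 < r) (x : Ω) :
    powerMean r l g x ^ r = ∑ i, l i * |g i x| ^ r :=
  Real.rpow_inv_rpow (sum_mul_abs_rpow_nonneg hl x) hr.ne'

theorem powerMeanRatio_nonneg (i : ι) (x : Ω) : 0 ≤ powerMeanRatio p r l g i x :=
  Real.rpow_nonneg (div_nonneg (abs_nonneg _) (powerMean_nonneg hl x)) p

theorem powerMeanRatio_rpow (hp : p ≠ 0) (i : ι) (x : Ω) :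
    powerMeanRatio p r l g i x ^ (r / p) = |g i x| ^ r / powerMean r l g x ^ r := by
  have hF := powerMean_nonneg hl (r := r) (g := g) x
  rw [powerMeanRatio, ← Real.rpow_mul (by positivity), mul_div_cancel₀ _ hp,
    Real.div_rpow (abs_nonneg _) hF]

theorem sum_mul_powerMeanRatio_rpow (hp : p ≠ 0) (hr : 0 < r) {x : Ω}
    (hx : powerMean r l g x ≠ 0) : ∑ i, l i * powerMeanRatio p r l g i x ^ (r / p) = 1 := by
  have hF := (powerMean_nonneg hl (r := r) (g := g) x).lt_of_ne' hx
  simp_rw [powerMeanRatio_rpow hl hp, ← mul_div_assoc]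
  rw [← Finset.sum_div, ← powerMean_rpow hl hr, div_self (Real.rpow_pos_of_pos hF r).ne']

theorem mul_powerMean_rpow_le_of_le_powerMeanRatio (hp : 0 < p) {y : ℝ} {i : ι} {x : Ω}
    (hy : y ≤ powerMeanRatio p r l g i x) : y * |powerMean r l g x| ^ p ≤ |g i x| ^ p := by
  have hF := powerMean_nonneg hl (r := r) (g := g) x
  rw [abs_of_nonneg hF]
  rcases hF.eq_or_lt with h0 | hF
  · rw [← h0, Real.zero_rpow hp.ne', mul_zero]
    positivity
  · rwa [powerMeanRatio, Real.div_rpow (abs_nonneg _) hF.le,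
      le_div_iff₀ (Real.rpow_pos_of_pos hF p)] at hy

end Nonneg

theorem exists_abs_powerMean_le (hl : ∀ i, 0 < l i) (hr : 0 < r) (hl1 : ∑ i, l i = 1) (x : Ω) :
    ∃ i, |powerMean r l g x| ≤ |g i x| := by
  have hl0 := fun i => (hl i).le
  have hsum : ∑ i, l i * powerMean r l g x ^ r ≤ ∑ i, l i * |g i x| ^ r := by
    rw [← Finset.sum_mul, hl1, one_mul, powerMean_rpow hl0 hr]
  obtain ⟨i, -, hi⟩ := Finset.exists_le_of_sum_le
    (Finset.nonempty_of_sum_ne_zero (hl1.trans_ne one_ne_zero)) hsum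
  refine ⟨i, ?_⟩
  rw [abs_of_nonneg (powerMean_nonneg hl0 x)]
  exact (Real.rpow_le_rpow_iff (powerMean_nonneg hl0 x) (abs_nonneg _) hr).mp
    (le_of_mul_le_mul_left hi (hl i))

theorem powerMeanRatio_le (hl : ∀ i, 0 < l i) (hp : 0 < p) (hr : 0 < r) (i : ι) (x : Ω) :
    powerMeanRatio p r l g i x ≤ (l i)⁻¹ ^ (r / p)⁻¹ := by
  have hl0 := fun i => (hl i).le
  by_cases hx : powerMean r l g x = 0
  · rw [powerMeanRatio, hx, _root_.div_zero, Real.zero_rpow hp.ne']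
    exact Real.rpow_nonneg (inv_nonneg.mpr (hl0 i)) _
  rw [Real.le_rpow_inv_iff_of_pos (powerMeanRatio_nonneg hl0 i x) (inv_nonneg.mpr (hl0 i))
    (div_pos hr hp), ← one_div, le_div_iff₀' (hl i),
    ← sum_mul_powerMeanRatio_rpow hl0 hp.ne' hr hx]
  exact Finset.single_le_sum (f := fun i => l i * powerMeanRatio p r l g i x ^ (r / p))
    (fun j _ => mul_nonneg (hl0 j) (Real.rpow_nonneg (powerMeanRatio_nonneg hl0 j x) _))
    (Finset.mem_univ i)

theorem exists_measurable_levelIndex_powerMeanRatio [MeasurableSpace Ω] {θ : ℝ} (hr : 0 < r)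
    (hrp : r < p) (hθ : 0 < θ) (hl : ∀ i, 0 < l i) (hg : ∀ i, Measurable (g i)) :
    ∃ m : ℕ, ∃ κ : Ω → ι → Fin (m + 1), Measurable κ ∧
      ∀ x i, (κ x i : ℕ) = levelIndex (r / p) θ (powerMeanRatio p r l g i x) := by
  have hp : 0 < p := hr.trans hrp
  let m := Finset.univ.sup fun i => levelIndex (r / p) θ ((l i)⁻¹ ^ (r / p)⁻¹)
  have hm : ∀ x i, levelIndex (r / p) θ (powerMeanRatio p r l g i x) ≤ m := fun x i =>
    (levelIndex_mono ((div_lt_one hp).mpr hrp) hθ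
      (powerMeanRatio_nonneg (fun j => (hl j).le) i x) (powerMeanRatio_le hl hp hr i x)).trans
      (Finset.le_sup (f := fun i => levelIndex (r / p) θ ((l i)⁻¹ ^ (r / p)⁻¹))
        (Finset.mem_univ i))
  refine ⟨m, fun x i => Fin.ofNat (m + 1) (levelIndex (r / p) θ (powerMeanRatio p r l g i x)),
    measurable_pi_lambda _ fun i => (measurable_of_countable (Fin.ofNat (m + 1))).comp
      (measurable_levelIndex.comp (measurable_powerMeanRatio hg i)),
    fun x i => Nat.mod_eq_of_lt (Nat.lt_succ_of_le (hm x i))⟩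

theorem rpow_sum_eq_mul_powerMean {a : ι → ℝ} (ha : ∀ i, 0 < a i)
    (hsum : 0 < ∑ i, a i ^ r) (f : ι → Ω → ℝ) :
    (fun x => (∑ i, |f i x| ^ r) ^ r⁻¹) = fun x => (∑ i, a i ^ r) ^ r⁻¹ *
      powerMean r (fun i => a i ^ r / ∑ j, a j ^ r) (fun i x => (a i)⁻¹ * f i x) x := by
  ext x
  have hterm : ∀ i, a i ^ r / (∑ j, a j ^ r) * |(a i)⁻¹ * f i x| ^ r =
      |f i x| ^ r / ∑ j, a j ^ r := fun i => by
    have hai := (Real.rpow_pos_of_pos (ha i) r).ne'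
    rw [abs_mul, abs_of_pos (inv_pos.mpr (ha i)), Real.mul_rpow (inv_nonneg.mpr (ha i).le)
      (abs_nonneg _), Real.inv_rpow (ha i).le]
    field_simp
  have hf : 0 ≤ ∑ i, |f i x| ^ r := Finset.sum_nonneg fun i _ => by positivity
  rw [powerMean, Finset.sum_congr rfl fun i _ => hterm i, ← Finset.sum_div,
    ← Real.mul_rpow hsum.le (div_nonneg hf hsum.le), mul_div_cancel₀ _ hsum.ne']

end PowerMean

/-! ### The convexity inequality -/

section Core

variable {Ω : Type*} [TopologicalSpace Ω] [MeasurableSpace Ω] {X : AdmissibleQuasinorm Ω}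
  {n : ℕ} {r p θ : ℝ} {l : Fin n → ℝ} {g : Fin n → Ω → ℝ}

theorem CrudeUpper.N_powerMean_ne_top (hU : CrudeUpper X p 1) (hp : 0 < p) (hr : 0 < r)
    (hl : ∀ i, 0 < l i) (hl1 : ∑ i, l i = 1) (hg : ∀ i, Measurable (g i))
    (hgtop : ∀ i, X.N (g i) ≠ ⊤) : X.N (powerMean r l g) ≠ ⊤ :=
  hU.N_ne_top_of_forall_exists_abs_le hp hg hgtop (measurable_powerMean hg)
    (exists_abs_powerMean_le hl hr hl1)

theorem massOn_powerMean_le (hU : CrudeUpper X p 1) (hL : CrudeLower X (p * (1 + θ)) 1)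
    (hr : 0 < r) (hrp : r < p) (hθ : 0 < θ) (hl : ∀ i, 0 < l i) (hl1 : ∑ i, l i = 1)
    (hg : ∀ i, Measurable (g i)) (hN : ∀ i, X.N (g i) ≤ 1) :
    X.massOn p (powerMean r l g) univ ≤ (1 + θ) ^ 2 *
      (Real.exp θ * (weightConstant (r / p) * ((1 + θ) / θ)) ^ (θ / (1 + θ))) := by
  have hp : 0 < p := hr.trans hrp
  have hR0 : 0 < r / p := div_pos hr hp
  have hR1 : r / p < 1 := (div_lt_one hp).mpr hrp
  have hl0 := fun i => (hl i).le
  have hF := measurable_powerMean (r := r) (l := l) hg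
  have hFfin := hU.N_powerMean_ne_top hp hr hl hl1 hg fun i =>
    ne_top_of_le_ne_top ENNReal.one_ne_top (hN i)
  obtain ⟨m, κ, hκ, hlevel⟩ := exists_measurable_levelIndex_powerMeanRatio hr hrp hθ hl hg
  obtain ⟨μ, hμ0, hμ, hle⟩ := exists_measure_le_massOn hU hL hp (lt_add_of_pos_right 1 hθ)
    hF hFfin hκ
  let H : Fin n → (Fin n → Fin (m + 1)) → ℝ := fun i s => levelHeight (r / p) θ (s i)
  have hcharged : ∀ s, μ s ≠ 0 → 1 ≤ Real.exp θ * ∑ i, l i * H i s := by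
    intro s hs
    obtain ⟨x, rfl, hx⟩ : ∃ x, κ x = s ∧ powerMean r l g x ≠ 0 := by
      by_contra! hnull
      refine hs ((hμ0 s).antisymm' ?_)
      have hs' := hμ {s}
      rwa [Finset.sum_singleton,
        X.massOn_eq_zero hp fun x hx => hnull x (by simpa using hx)] at hs'
    simp only [H, hlevel]
    exact one_le_exp_mul_sum_levelHeight hR0 hR1 hθ hl0 hl1
      (fun i => powerMeanRatio_nonneg hl0 i x) (sum_mul_powerMeanRatio_rpow hl0 hp.ne' hr hx)
  have hfunction : ∀ i, ∑ s, μ s * H i s ≤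
      (weightConstant (r / p) * ((1 + θ) / θ)) ^ (θ / (1 + θ)) := fun i =>
    sum_mul_levelHeight_le hL hp hR0 hR1 hθ hF (hg i) (hN i) hκ hμ (ℓ := fun s => s i)
      fun x k hk => mul_powerMean_rpow_le_of_le_powerMeanRatio hl0 hp <|
        levelThreshold_le_of_levelIndex_eq_succ hR1 hθ (powerMeanRatio_nonneg hl0 i x)
          ((hlevel x i).symm.trans hk)
  refine hle.trans (mul_le_mul_of_nonneg_left ?_ (sq_nonneg _))
  exact sum_le_mul_of_one_le_mul_sum hμ0 hl0 hl1 (Real.exp_pos θ).le hcharged hfunction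

end Core

section Convexity

variable {Ω : Type*} [TopologicalSpace Ω] [MeasurableSpace Ω] {X : AdmissibleQuasinorm Ω}
  {n : ℕ} {r p θ C : ℝ}

theorem mul_div_rpow_le_exp (hC : 1 ≤ C) (hθ : 0 < θ) :
    (C * ((1 + θ) / θ)) ^ (θ / (1 + θ)) ≤ Real.exp (θ * (1 + Real.log C + |Real.log θ|)) := by
  have h1 : 0 < 1 + θ := by positivity
  have hlog : Real.log (C * ((1 + θ) / θ)) ≤ (1 + Real.log C + |Real.log θ|) * (1 + θ) := by
    rw [Real.log_mul (by positivity) (by positivity), Real.log_div h1.ne' hθ.ne']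
    have hlogC : 0 ≤ Real.log C := Real.log_nonneg hC
    have hlog1 : Real.log (1 + θ) ≤ θ := by linarith [Real.log_le_sub_one_of_pos h1]
    have hexcess : 0 ≤ θ * (Real.log C + |Real.log θ|) := by positivity
    linarith [neg_le_abs (Real.log θ)]
  rw [Real.rpow_def_of_pos (by positivity), Real.exp_le_exp, ← mul_div_assoc, div_le_iff₀ h1,
    mul_comm, mul_assoc]
  exact mul_le_mul_of_nonneg_left hlog hθ.le

theorem sq_mul_exp_mul_rpow_le_exp (hC : 1 ≤ C) (hθ : 0 < θ) :
    (1 + θ) ^ 2 * (Real.exp θ * (C * ((1 + θ) / θ)) ^ (θ / (1 + θ))) ≤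
      Real.exp (θ * (4 + Real.log C + |Real.log θ|)) := by
  have hsq : (1 + θ) ^ 2 ≤ Real.exp θ ^ 2 :=
    pow_le_pow_left₀ (by positivity) (add_comm 1 θ ▸ Real.add_one_le_exp θ) 2
  calc (1 + θ) ^ 2 * (Real.exp θ * (C * ((1 + θ) / θ)) ^ (θ / (1 + θ)))
      ≤ Real.exp θ ^ 2 *
          (Real.exp θ * Real.exp (θ * (1 + Real.log C + |Real.log θ|))) := by
        gcongr
        exact mul_div_rpow_le_exp hC hθ
    _ = Real.exp (θ * (4 + Real.log C + |Real.log θ|)) := by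
        rw [sq, ← Real.exp_add, ← Real.exp_add, ← Real.exp_add]
        ring_nf

/-- The constant `c(r, p)` in the exponent of the bound on the `r`-convexity constant. -/
noncomputable def convexityExponent (r p : ℝ) : ℝ :=
  (4 + Real.log (weightConstant (r / p))) / p

theorem N_powerMean_le (hU : CrudeUpper X p 1) (hL : CrudeLower X (p * (1 + θ)) 1)
    (hr : 0 < r) (hrp : r < p) (hθ : 0 < θ) {l : Fin n → ℝ} (hl : ∀ i, 0 < l i)
    (hl1 : ∑ i, l i = 1) {g : Fin n → Ω → ℝ} (hg : ∀ i, Measurable (g i))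
    (hN : ∀ i, X.N (g i) ≤ 1) :
    X.N (powerMean r l g) ≤
      ENNReal.ofReal (Real.exp (θ * (convexityExponent r p + |Real.log θ| / p))) := by
  have hp : 0 < p := hr.trans hrp
  have hfin := hU.N_powerMean_ne_top hp hr hl hl1 hg fun i =>
    ne_top_of_le_ne_top ENNReal.one_ne_top (hN i)
  have hmass := (massOn_powerMean_le hU hL hr hrp hθ hl hl1 hg hN).trans
    (sq_mul_exp_mul_rpow_le_exp
      (one_le_weightConstant (div_pos hr hp) ((div_lt_one hp).mpr hrp)) hθ)
  rw [X.massOn_univ, ← ENNReal.le_ofReal_iff_toReal_le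
    (ENNReal.rpow_ne_top_of_nonneg hp.le hfin) (Real.exp_pos _).le] at hmass
  refine (ENNReal.rpow_le_rpow_iff hp).mp (hmass.trans_eq ?_)
  rw [ENNReal.ofReal_rpow_of_pos (Real.exp_pos _), ← Real.exp_mul, convexityExponent]
  congr 2
  field_simp

/-- The `r`-convexity inequality with constant `M` for all finite families of functions of finite
quasinorm, that is, `M^{(r)}(X) ≤ M`. -/
def RConvexWith (X : AdmissibleQuasinorm Ω) (r M : ℝ) : Prop :=
  ∀ (n : ℕ) (f : Fin n → Ω → ℝ), (∀ i, Measurable (f i)) → (∀ i, X.N (f i) < ⊤) →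
    X.N (fun x => (∑ i, |f i x| ^ r) ^ (1 / r)) ≤
      ENNReal.ofReal M * (∑ i, X.N (f i) ^ r) ^ (1 / r)

theorem N_rpow_sum_le_of_N_powerMean_le {M : ℝ≥0∞} (hr : 0 < r)
    (hM : ∀ l : Fin n → ℝ, (∀ i, 0 < l i) → ∑ i, l i = 1 → ∀ g : Fin n → Ω → ℝ,
      (∀ i, Measurable (g i)) → (∀ i, X.N (g i) ≤ 1) → X.N (powerMean r l g) ≤ M)
    {f : Fin n → Ω → ℝ} (hf : ∀ i, Measurable (f i)) {a : Fin n → ℝ} (ha : ∀ i, 0 < a i)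
    (hfa : ∀ i, X.N (f i) ≤ ENNReal.ofReal (a i)) :
    X.N (fun x => (∑ i, |f i x| ^ r) ^ r⁻¹) ≤
      ENNReal.ofReal ((∑ i, a i ^ r) ^ r⁻¹) * M := by
  rcases isEmpty_or_nonempty (Fin n) with hn | hn
  · simp only [Finset.univ_eq_empty, Finset.sum_empty, Real.zero_rpow (inv_pos.mpr hr).ne']
    exact X.N_zero.trans_le zero_le
  have har : ∀ i, 0 < a i ^ r := fun i => Real.rpow_pos_of_pos (ha i) r
  have hsum : 0 < ∑ i, a i ^ r := Finset.sum_pos (fun i _ => har i) Finset.univ_nonempty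
  have hg : ∀ i, Measurable fun x => (a i)⁻¹ * f i x := fun i => (hf i).const_mul _
  rw [rpow_sum_eq_mul_powerMean ha hsum f, X.smul _ _ (measurable_powerMean hg),
    abs_of_nonneg (Real.rpow_nonneg hsum.le _)]
  refine mul_le_mul_right (hM _ (fun i => div_pos (har i) hsum) ?_ _ hg fun i => ?_) _
  · rw [← Finset.sum_div, div_self hsum.ne']
  · rw [X.smul _ _ (hf i), abs_of_pos (inv_pos.mpr (ha i)), ENNReal.ofReal_inv_of_pos (ha i)]
    exact (ENNReal.inv_mul_le_iff (ENNReal.ofReal_pos.mpr (ha i)).ne' ENNReal.ofReal_ne_top).mpr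
      ((hfa i).trans_eq (mul_one _).symm)

theorem rConvexWith_of_N_powerMean_le {M : ℝ} (hr : 0 < r)
    (hM : ∀ (n : ℕ) (l : Fin n → ℝ), (∀ i, 0 < l i) → ∑ i, l i = 1 → ∀ g : Fin n → Ω → ℝ,
      (∀ i, Measurable (g i)) → (∀ i, X.N (g i) ≤ 1) →
        X.N (powerMean r l g) ≤ ENNReal.ofReal M) : RConvexWith X r M := by
  intro n f hf hfin
  -- The perturbation `ε` keeps the normalizing factors positive when some `X.N (f i) = 0`.
  let b : ℝ → ℝ≥0∞ := fun ε =>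
    ENNReal.ofReal ((∑ i, ((X.N (f i)).toReal + ε) ^ r) ^ r⁻¹) * ENNReal.ofReal M
  have hb : Continuous b := by
    refine (ENNReal.continuous_mul_const ENNReal.ofReal_ne_top).comp
      (ENNReal.continuous_ofReal.comp (Continuous.rpow_const (continuous_finsetSum _ fun i _ => ?_)
        fun _ => Or.inr (inv_nonneg.mpr hr.le)))
    exact (continuous_const.add continuous_id).rpow_const fun _ => Or.inr hr.le
  have hb0 : b 0 = ENNReal.ofReal M * (∑ i, X.N (f i) ^ r) ^ r⁻¹ := by
    have hterm : ∀ i, 0 ≤ (X.N (f i)).toReal ^ r := fun i => by positivity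
    simp only [b, add_zero]
    rw [mul_comm, ← ENNReal.ofReal_rpow_of_nonneg (Finset.sum_nonneg fun i _ => hterm i)
      (inv_nonneg.mpr hr.le), ENNReal.ofReal_sum_of_nonneg fun i _ => hterm i]
    simp only [← ENNReal.ofReal_rpow_of_nonneg ENNReal.toReal_nonneg hr.le,
      ENNReal.ofReal_toReal (hfin _).ne]
  rw [one_div, ← hb0]
  refine ge_of_tendsto (hb.continuousWithinAt (s := Ioi 0)) ?_
  filter_upwards [self_mem_nhdsWithin] with ε hε
  refine N_rpow_sum_le_of_N_powerMean_le hr (hM n) hf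
    (fun i => add_pos_of_nonneg_of_pos ENNReal.toReal_nonneg hε) fun i => ?_
  rw [← ENNReal.ofReal_toReal (hfin i).ne]
  exact ENNReal.ofReal_le_ofReal (by simpa using le_of_lt hε)

end Convexity

theorem rConvexity_constant_bound_general (r p : ℝ) (hr : 0 < r) (hrp : r < p) :
    ∃ c : ℝ,
      ∀ (Ω : Type*) [TopologicalSpace Ω] [MeasurableSpace Ω] (X : AdmissibleQuasinorm Ω) (q θ : ℝ),
        0 < θ → q / p = 1 + θ → CrudeUpper X p 1 → CrudeLower X q 1 →
        RConvexWith X r (Real.exp (θ * (c + |Real.log θ| / p))) := by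
  refine ⟨convexityExponent r p, fun Ω _ _ X q θ hθ hq hU hL => ?_⟩
  obtain rfl : q = p * (1 + θ) := by rw [← hq, mul_div_cancel₀ _ (hr.trans hrp).ne']
  exact rConvexWith_of_N_powerMean_le hr fun n l hl hl1 g hg hN =>
    N_powerMean_le hU hL hr hrp hθ hl hl1 hg hN

/-- For `0 < r < p < ∞` there is a constant `c = c(r,p)` such that any
admissible quasinorm with an (exact) upper `p`-estimate and lower `q`-estimate, where
`q/p = 1 + θ` and `0 < θ < 1`, has `r`-convexity constant `M^{(r)}(X)` with
`log M^{(r)}(X) ≤ θ (c + (1/p)|log θ|)`; i.e. the `r`-convexity inequality holds with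
constant `exp (θ (c + |log θ|/p))`. -/
theorem rConvexity_constant_bound
    (r p : ℝ) (hr : 0 < r) (hrp : r < p) :
    ∃ c : ℝ,
      ∀ (Ω : Type) [TopologicalSpace Ω] [CompactSpace Ω] [T2Space Ω]
        [MeasurableSpace Ω] [BorelSpace Ω]
        (X : AdmissibleQuasinorm Ω) (q θ : ℝ),
        0 < θ → θ < 1 → q / p = 1 + θ →
        CrudeUpper X p 1 → CrudeLower X q 1 →
        ∀ (n : ℕ) (f : Fin n → Ω → ℝ), (∀ i, Measurable (f i)) →
          (∀ i, X.N (f i) < ⊤) →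
          X.N (fun x => (∑ i, |f i x| ^ r) ^ (1 / r)) ≤
            ENNReal.ofReal (Real.exp (θ * (c + |Real.log θ| / p))) *
              (∑ i, X.N (f i) ^ r) ^ (1 / r) := by
  obtain ⟨c, hc⟩ := rConvexity_constant_bound_general r p hr hrp
  exact ⟨c, fun Ω _ _ _ _ _ X q θ hθ _ hq hU hL => hc Ω X q θ hθ hq hU hL⟩
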